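/- arXiv:1707.02314 — 3 statements merged into one kernel-verified Lean document; each statement's English description precedes it below -/
import Mathlib

section
/- (Duality theorem, Riemann–Liouville case.) Let a ∈ ℝ, let I be an interval with least element a, nonempty interior, and I ⊂ [a,∞), let m ∈ ℕ*, let α = (α₁,…,α_m) ∈ (0,1]^m, and let A : I → ℝ^{m×m} be locally essentially bounded. Suppose Z satisfies the left state-transition integral equation: for almost every s, t ∈ I with s < t and all i, j, Z_{ij}(t,s) = ((t−s)^{α_i−1}/Γ(α_i))·δ_{ij} + (1/Γ(α_i)) ∫_s^t (t−τ)^{α_i−1} (A(τ) Z(τ,s))_{ij} dτ, together with the bound |Z_{ij}(t,s)| ≤ (t−s)^{α_i−1}·Θ^b on each [a,b] ⊂ I for some Θ^b ≥ 0. Then Z also satisfies the right state-transition integral equation with the transposed multi-order: for almost every s, t ∈ I with s < t and all i, j, Z_{ij}(t,s) = ((t−s)^{α_j−1}/Γ(α_j))·δ_{ij} + (1/Γ(α_j)) ∫_s^t (τ−s)^{α_j−1} (Z(t,τ) A(τ))_{ij} dτ. -/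
open MeasureTheory Set

/-- weighted column bound -/
def KBd {X : Type*} [MeasurableSpace X] (μ : Measure X) (w : X → ENNReal) (C : ENNReal)
    (K : X → X → ℝ) : Prop :=
  ∀ᵐ y ∂μ, ∫⁻ x, ‖K x y‖ₑ * w x ∂μ ≤ C * w y

section abstractPart
set_option linter.unusedSectionVars false
variable {X : Type*} [MeasurableSpace X] {μ : Measure X} [SFinite μ] {w : X → ENNReal}

lemma meas_left {K : X → X → ℝ} (hK : Measurable (Function.uncurry K)) (x : X) :
    Measurable (K x) := hK.of_uncurry_left
lemma meas_right {K : X → X → ℝ} (hK : Measurable (Function.uncurry K)) (y : X) :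
    Measurable (fun x => K x y) := hK.of_uncurry_right

lemma meas_comp_abs {K : X → X → ℝ} (hK : Measurable (Function.uncurry K)) {f : X → ENNReal}
    (hf : Measurable f) : Measurable (fun x => ∫⁻ u, ‖K x u‖ₑ * f u ∂μ) := by
  apply Measurable.lintegral_prod_right'
    (f := fun p : X × X => ‖K p.1 p.2‖ₑ * f p.2)
  exact (hK.enorm).mul (hf.comp measurable_snd)

lemma comp_abs_le {K : X → X → ℝ} (hK : Measurable (Function.uncurry K)) {C : ENNReal}
    (hw : Measurable w) (hb : KBd μ w C K) {f : X → ENNReal} (hf : Measurable f) :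
    ∫⁻ x, (∫⁻ u, ‖K x u‖ₑ * f u ∂μ) * w x ∂μ ≤ C * ∫⁻ u, f u * w u ∂μ := by
  have hm : Measurable (fun p : X × X => ‖K p.1 p.2‖ₑ * f p.2 * w p.1) :=
    ((hK.enorm).mul (hf.comp measurable_snd)).mul (hw.comp measurable_fst)
  calc ∫⁻ x, (∫⁻ u, ‖K x u‖ₑ * f u ∂μ) * w x ∂μ
      = ∫⁻ x, ∫⁻ u, ‖K x u‖ₑ * f u * w x ∂μ ∂μ := by
        refine lintegral_congr fun x => ?_
        rw [lintegral_mul_const]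
        exact ((meas_left hK x).enorm).mul hf
    _ = ∫⁻ u, ∫⁻ x, ‖K x u‖ₑ * f u * w x ∂μ ∂μ :=
        lintegral_lintegral_swap hm.aemeasurable
    _ = ∫⁻ u, (∫⁻ x, ‖K x u‖ₑ * w x ∂μ) * f u ∂μ := by
        refine lintegral_congr fun u => ?_
        rw [← lintegral_mul_const (f := fun x => ‖K x u‖ₑ * w x) _ (((meas_right hK u).enorm).mul hw)]
        refine lintegral_congr fun x => ?_
        ring
    _ ≤ ∫⁻ u, C * (f u * w u) ∂μ := by
        apply lintegral_mono_ae
        filter_upwards [hb] with u hu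
        calc _ ≤ (C * w u) * f u := by gcongr
          _ = _ := by ring
    _ = _ := lintegral_const_mul _ (hf.mul hw)

lemma ae_finite_of_weight {g : X → ENNReal} (hg : Measurable g) (hw : Measurable w)
    (hw0 : ∀ x, w x ≠ 0) (h : ∫⁻ x, g x * w x ∂μ ≠ ⊤) : ∀ᵐ x ∂μ, g x < ⊤ := by
  filter_upwards [ae_lt_top (hg.mul hw) h] with x hx
  by_contra hc
  have : g x = ⊤ := by simpa using hc
  simp [this, ENNReal.top_mul (hw0 x)] at hx

lemma comp_integrable {K L : X → X → ℝ} (hK : Measurable (Function.uncurry K))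
    (hL : Measurable (Function.uncurry L)) (hw : Measurable w)
    (hw0 : ∀ x, w x ≠ 0) (hwt : ∀ x, w x ≠ ⊤) {C C' : ENNReal} (hC : C ≠ ⊤) (hC' : C' ≠ ⊤)
    (hbK : KBd μ w C K) (hbL : KBd μ w C' L) :
    ∀ᵐ y ∂μ, ∀ᵐ x ∂μ, Integrable (fun u => K x u * L u y) μ := by
  filter_upwards [hbL] with y hy
  have h1 := comp_abs_le hK hw hbK (meas_right hL y).enorm
  have h2 : ∫⁻ x, (∫⁻ u, ‖K x u‖ₑ * ‖L u y‖ₑ ∂μ) * w x ∂μ ≠ ⊤ := by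
    refine ne_top_of_le_ne_top ?_ (h1.trans (mul_le_mul_right hy C))
    exact ENNReal.mul_ne_top hC (ENNReal.mul_ne_top hC' (hwt y))
  filter_upwards [ae_finite_of_weight (meas_comp_abs hK (meas_right hL y).enorm) hw hw0 h2]
    with x hx
  refine ⟨((meas_left hK x).mul (meas_right hL y)).aestronglyMeasurable, ?_⟩
  simpa [HasFiniteIntegral, enorm_mul] using hx

lemma triple_integrable {P z Q : X → X → ℝ} (hP : Measurable (Function.uncurry P))
    (hz : Measurable (Function.uncurry z)) (hQ : Measurable (Function.uncurry Q))
    (hw : Measurable w) (hw0 : ∀ x, w x ≠ 0) (hwt : ∀ x, w x ≠ ⊤) {C C' C'' : ENNReal}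
    (hC : C ≠ ⊤) (hC' : C' ≠ ⊤) (hC'' : C'' ≠ ⊤)
    (hbP : KBd μ w C P) (hbz : KBd μ w C' z) (hbQ : KBd μ w C'' Q) :
    ∀ᵐ y ∂μ, ∀ᵐ x ∂μ,
      Integrable (fun p : X × X => P x p.1 * (z p.1 p.2 * Q p.2 y)) (μ.prod μ) := by
  filter_upwards [hbQ] with y hy
  have hq := (meas_right hQ y).enorm
  have hzq := meas_comp_abs (μ := μ) hz hq
  have h0 := comp_abs_le hz hw hbz hq
  have h1 := comp_abs_le hP hw hbP hzq
  have h2 : ∫⁻ x, (∫⁻ u, ‖P x u‖ₑ * (∫⁻ v, ‖z u v‖ₑ * ‖Q v y‖ₑ ∂μ) ∂μ) * w x ∂μ ≠ ⊤ := by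
    refine ne_top_of_le_ne_top ?_ (h1.trans (mul_le_mul_right
      (h0.trans (mul_le_mul_right hy _)) C))
    exact ENNReal.mul_ne_top hC (ENNReal.mul_ne_top hC' (ENNReal.mul_ne_top hC'' (hwt y)))
  filter_upwards [ae_finite_of_weight (meas_comp_abs hP hzq) hw hw0 h2] with x hx
  have hm : Measurable (fun p : X × X => P x p.1 * (z p.1 p.2 * Q p.2 y)) :=
    ((meas_left hP x).comp measurable_fst).mul
      (hz.mul ((meas_right hQ y).comp measurable_snd))
  refine ⟨hm.aestronglyMeasurable, ?_⟩
  rw [HasFiniteIntegral, lintegral_prod _ hm.enorm.aemeasurable]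
  refine lt_of_eq_of_lt ?_ hx
  refine lintegral_congr fun u => ?_
  rw [← lintegral_const_mul (f := fun v => ‖z u v‖ₑ * ‖Q v y‖ₑ) _
    (((meas_left hz u).enorm).mul hq)]
  simp [enorm_mul]

theorem abstract_duality {z φ P Q : X → X → ℝ}
    (hz : Measurable (Function.uncurry z)) (hφ : Measurable (Function.uncurry φ))
    (hP : Measurable (Function.uncurry P)) (hQ : Measurable (Function.uncurry Q))
    (hw : Measurable w) (hw0 : ∀ x, w x ≠ 0) (hwt : ∀ x, w x ≠ ⊤)
    {Cz Cφ CP CQ : ENNReal}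
    (hCz : Cz ≠ ⊤) (hCφ : Cφ ≠ ⊤) (hCP : CP < 1) (hCQ : CQ ≠ ⊤)
    (hbz : KBd μ w Cz z) (hbφ : KBd μ w Cφ φ) (hbP : KBd μ w CP P) (hbQ : KBd μ w CQ Q)
    (hPQ : ∀ᵐ y ∂μ, ∀ᵐ x ∂μ, ∫ u, P x u * φ u y ∂μ = ∫ u, φ x u * Q u y ∂μ)
    (hzeq : ∀ᵐ y ∂μ, ∀ᵐ x ∂μ, z x y = φ x y + ∫ u, P x u * z u y ∂μ) :
    ∀ᵐ x ∂μ, ∀ᵐ y ∂μ, z x y = φ x y + ∫ u, z x u * Q u y ∂μ ∧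
      Integrable (fun u => z x u * Q u y) μ := by
  have hCP' : CP ≠ ⊤ := ne_top_of_lt hCP
  have hcompm : ∀ {K L : X → X → ℝ}, Measurable (Function.uncurry K) →
      Measurable (Function.uncurry L) →
      StronglyMeasurable (fun q : X × X => ∫ u, K q.1 u * L u q.2 ∂μ) := by
    intro K L hK hL
    apply StronglyMeasurable.integral_prod_right'
      (f := fun r : (X × X) × X => K r.1.1 r.2 * L r.2 r.1.2)
    apply Measurable.stronglyMeasurable
    exact (hK.comp ((measurable_fst.comp measurable_fst).prodMk measurable_snd)).mul
      (hL.comp (measurable_snd.prodMk (measurable_snd.comp measurable_fst)))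
  have hset : MeasurableSet {q : X × X | z q.1 q.2 = φ q.1 q.2 + ∫ u, z q.1 u * Q u q.2 ∂μ ∧
      Integrable (fun u => z q.1 u * Q u q.2) μ} := by
    apply MeasurableSet.inter
    · exact measurableSet_eq_fun hz (hφ.add (hcompm hz hQ).measurable)
    · apply measurableSet_integrable (f := fun q : X × X => fun u => z q.1 u * Q u q.2)
      apply Measurable.stronglyMeasurable
      exact (hz.comp ((measurable_fst.comp measurable_fst).prodMk measurable_snd)).mul
        (hQ.comp (measurable_snd.prodMk (measurable_snd.comp measurable_fst)))
  have hset2 : MeasurableSet {q : X × X | z q.1 q.2 = φ q.1 q.2 + ∫ u, P q.1 u * z u q.2 ∂μ} :=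
    measurableSet_eq_fun hz (hφ.add (hcompm hP hz).measurable)
  rw [Measure.ae_ae_comm hset]
  have hzeq' : ∀ᵐ x ∂μ, ∀ᵐ y ∂μ, z x y = φ x y + ∫ u, P x u * z u y ∂μ :=
    (Measure.ae_ae_comm hset2).2 hzeq
  filter_upwards [hPQ, hzeq, comp_integrable hP hz hw hw0 hwt hCP' hCz hbP hbz,
    comp_integrable hP hφ hw hw0 hwt hCP' hCφ hbP hbφ,
    comp_integrable hz hQ hw hw0 hwt hCz hCQ hbz hbQ,
    comp_integrable hφ hQ hw hw0 hwt hCφ hCQ hbφ hbQ,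
    triple_integrable hP hz hQ hw hw0 hwt hCP' hCz hCQ hbP hbz hbQ, hbz, hbφ, hbQ]
    with y h1 h2 h3 h4 h5 h6 h7 hbzy hbφy hbQy
  set D : X → ℝ := fun x => z x y - φ x y - ∫ u, z x u * Q u y ∂μ with hD
  have hDm : Measurable D :=
    ((meas_right hz y).sub (meas_right hφ y)).sub
      ((hcompm hz hQ).measurable.comp (measurable_id.prodMk measurable_const))
  have hDeq : ∀ᵐ x ∂μ, D x = ∫ u, P x u * D u ∂μ := by
    filter_upwards [h1, h2, h3, h4, h5, h6, h7, hzeq'] with x g1 g2 g3 g4 g5 g6 g7 g8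
    have e1 : ∫ u, P x u * D u ∂μ = ∫ u, P x u * z u y ∂μ - ∫ u, P x u * φ u y ∂μ
        - ∫ u, P x u * (∫ v, z u v * Q v y ∂μ) ∂μ := by
      have i3 : Integrable (fun u => P x u * (∫ v, z u v * Q v y ∂μ)) μ := by
        have := g7.integral_prod_left
        simpa only [integral_const_mul] using this
      rw [← integral_sub g3 g4, ← integral_sub (f := fun u => P x u * z u y - P x u * φ u y) (g3.sub g4) i3]
      refine integral_congr_ae (Filter.Eventually.of_forall fun u => ?_)
      simp only [hD]; ring
    have e2 : ∫ u, P x u * (∫ v, z u v * Q v y ∂μ) ∂μ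
        = ∫ v, (∫ u, P x u * z u v ∂μ) * Q v y ∂μ := by
      simp_rw [← integral_const_mul, ← integral_mul_const]
      rw [integral_integral_swap (f := fun u v => P x u * (z u v * Q v y)) g7]
      simp_rw [mul_assoc]
    have e3 : ∫ v, (∫ u, P x u * z u v ∂μ) * Q v y ∂μ
        = ∫ v, z x v * Q v y ∂μ - ∫ v, φ x v * Q v y ∂μ := by
      rw [← integral_sub g5 g6]
      apply integral_congr_ae
      filter_upwards [g8] with v hv
      rw [hv]; ring
    rw [e1, e2, e3, g1]
    simp only [hD]
    linarith
  have hle : ∀ᵐ x ∂μ, ‖D x‖ₑ ≤ ∫⁻ u, ‖P x u‖ₑ * ‖D u‖ₑ ∂μ := by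
    filter_upwards [hDeq] with x hx
    rw [hx]
    refine (enorm_integral_le_lintegral_enorm _).trans (le_of_eq ?_)
    simp [enorm_mul]
  have hS1 : ∫⁻ x, ‖D x‖ₑ * w x ∂μ ≤ CP * ∫⁻ x, ‖D x‖ₑ * w x ∂μ := by
    refine le_trans (lintegral_mono_ae ?_) (comp_abs_le hP hw hbP hDm.enorm)
    filter_upwards [hle] with x hx
    gcongr
  have hSfin : ∫⁻ x, ‖D x‖ₑ * w x ∂μ ≠ ⊤ := by
    have hq := (meas_right hQ y).enorm
    have b : ∀ x, ‖D x‖ₑ * w x ≤ ‖z x y‖ₑ * w x + ‖φ x y‖ₑ * w x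
        + (∫⁻ u, ‖z x u‖ₑ * ‖Q u y‖ₑ ∂μ) * w x := by
      intro x
      rw [← add_mul, ← add_mul]
      gcongr
      refine enorm_sub_le.trans ?_
      gcongr
      · exact enorm_sub_le
      · refine (enorm_integral_le_lintegral_enorm _).trans (le_of_eq ?_)
        simp [enorm_mul]
    refine ne_top_of_le_ne_top ?_ (lintegral_mono b)
    rw [lintegral_add_left, lintegral_add_left]
    · refine ENNReal.add_ne_top.2 ⟨ENNReal.add_ne_top.2 ⟨?_, ?_⟩, ?_⟩
      · exact ne_top_of_le_ne_top (ENNReal.mul_ne_top hCz (hwt y)) hbzy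
      · exact ne_top_of_le_ne_top (ENNReal.mul_ne_top hCφ (hwt y)) hbφy
      · refine ne_top_of_le_ne_top ?_ ((comp_abs_le hz hw hbz hq).trans
          (mul_le_mul_right hbQy _))
        exact ENNReal.mul_ne_top hCz (ENNReal.mul_ne_top hCQ (hwt y))
    · exact (meas_right hz y).enorm.mul hw
    · exact ((meas_right hz y).enorm.mul hw).add ((meas_right hφ y).enorm.mul hw)
  have hS0 : ∫⁻ x, ‖D x‖ₑ * w x ∂μ = 0 := by
    by_contra h0
    have : CP * ∫⁻ x, ‖D x‖ₑ * w x ∂μ < 1 * ∫⁻ x, ‖D x‖ₑ * w x ∂μ :=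
      ENNReal.mul_lt_mul_left h0 hSfin hCP
    rw [one_mul] at this
    exact absurd hS1 (not_le.2 this)
  rw [lintegral_eq_zero_iff (f := fun x => ‖D x‖ₑ * w x) (hDm.enorm.mul hw)] at hS0
  filter_upwards [hS0, h5] with x hx g5
  refine ⟨?_, g5⟩
  have : D x = 0 := by simpa [hw0 x] using hx
  simp only [hD] at this
  linarith

end abstractPart

section concretePart

/-- sum of the singular kernels -/
noncomputable def hker {m : ℕ} (α : Fin m → ℝ) (u : ℝ) : ℝ :=
  ∑ k, (Ioi (0:ℝ)).indicator (fun u => u ^ (α k - 1)) u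

lemma hker_nonneg {m : ℕ} (α : Fin m → ℝ) (u : ℝ) : 0 ≤ hker α u :=
  Finset.sum_nonneg fun k _ => indicator_nonneg (fun v hv => Real.rpow_nonneg (le_of_lt hv) _) u

lemma hker_meas {m : ℕ} (α : Fin m → ℝ) : Measurable (hker α) := by
  unfold hker
  refine Finset.measurable_sum _ fun k _ => ?_
  exact Measurable.indicator (by fun_prop) measurableSet_Ioi

lemma le_hker {m : ℕ} (α : Fin m → ℝ) {u : ℝ} (hu : 0 < u) (k : Fin m) :
    u ^ (α k - 1) ≤ hker α u := by
  have := Finset.single_le_sum (f := fun k => (Ioi (0:ℝ)).indicator (fun u => u ^ (α k - 1)) u)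
    (fun k _ => indicator_nonneg (fun v hv => Real.rpow_nonneg (le_of_lt hv) _) u)
    (Finset.mem_univ k)
  simpa [hker, hu] using this

lemma hker_laplace {m : ℕ} (α : Fin m → ℝ) (hα : ∀ i, 0 < α i) {l : ℝ} (hl : 0 < l) :
    ∫⁻ u, ENNReal.ofReal (hker α u * Real.exp (-(l * u)))
      = ENNReal.ofReal (∑ k, (1 / l) ^ (α k) * Real.Gamma (α k)) := by
  have h1 : ∀ u, ENNReal.ofReal (hker α u * Real.exp (-(l * u))) =
      ∑ k, (Ioi (0:ℝ)).indicator
        (fun u => ENNReal.ofReal (u ^ (α k - 1) * Real.exp (-(l * u)))) u := by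
    intro u
    unfold hker
    rw [Finset.sum_mul, ENNReal.ofReal_sum_of_nonneg]
    · refine Finset.sum_congr rfl fun k _ => ?_
      by_cases hu : u ∈ Ioi (0:ℝ) <;> simp [hu]
    · intro k _
      exact mul_nonneg (indicator_nonneg (fun v hv => Real.rpow_nonneg (le_of_lt hv) _) u)
        (Real.exp_pos _).le
  simp_rw [h1]
  rw [lintegral_finsetSum, ENNReal.ofReal_sum_of_nonneg]
  · refine Finset.sum_congr rfl fun k _ => ?_
    rw [lintegral_indicator measurableSet_Ioi]
    have hI := Real.integral_rpow_mul_exp_neg_mul_Ioi (hα k) hl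
    have hpos : 0 < (1 / l) ^ (α k) * Real.Gamma (α k) := by
      have := Real.Gamma_pos_of_pos (hα k)
      positivity
    rw [← hI, ofReal_integral_eq_lintegral_ofReal]
    · by_contra hc
      rw [integral_undef hc] at hI
      linarith
    · filter_upwards [ae_restrict_mem measurableSet_Ioi] with u hu
      exact mul_nonneg (Real.rpow_nonneg (le_of_lt hu) _) (Real.exp_pos _).le
  · intro k _
    have := Real.Gamma_pos_of_pos (hα k)
    positivity
  · intro k _
    exact Measurable.indicator (by fun_prop) measurableSet_Ioi

lemma hker_tendsto {m : ℕ} (α : Fin m → ℝ) (hα : ∀ i, 0 < α i) :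
    Filter.Tendsto (fun l : ℝ => ∑ k, (1 / l) ^ (α k) * Real.Gamma (α k)) Filter.atTop
      (nhds 0) := by
  have : (0:ℝ) = ∑ k : Fin m, 0 * Real.Gamma (α k) := by simp
  rw [this]
  refine tendsto_finsetSum _ fun k _ => Filter.Tendsto.mul_const _ ?_
  have h := tendsto_rpow_neg_atTop (hα k)
  refine h.congr' ?_
  filter_upwards [Filter.eventually_gt_atTop 0] with l hl
  rw [one_div, Real.inv_rpow hl.le, Real.rpow_neg hl.le]

lemma ae_prod_of {m : ℕ} {ν : Measure ℝ} {p : ℝ × Fin m → Prop}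
    (h : ∀ᵐ t ∂ν, ∀ i, p (t, i)) :
    ∀ᵐ x ∂(ν.prod (Measure.count : Measure (Fin m))), p x := by
  have := (Measure.quasiMeasurePreserving_fst (μ := ν)
    (ν := (Measure.count : Measure (Fin m)))).ae h
  filter_upwards [this] with x hx
  exact hx x.2

lemma ae_of_prod {m : ℕ} {ν : Measure ℝ} {p : ℝ × Fin m → Prop}
    (h : ∀ᵐ x ∂(ν.prod (Measure.count : Measure (Fin m))), p x) :
    ∀ᵐ t ∂ν, ∀ i, p (t, i) := by
  filter_upwards [Measure.ae_ae_of_ae_prod h] with t ht i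
  rw [Measure.ae_count_iff] at ht
  exact ht i

lemma KBd_of_hker {m : ℕ} (α : Fin m → ℝ) (hα : ∀ i, 0 < α i) {a b : ℝ} {l : ℝ} (hl : 0 < l)
    {K : ℝ × Fin m → ℝ × Fin m → ℝ} {C : ℝ} (hC : 0 ≤ C)
    (h : ∀ᵐ s ∂(volume.restrict (Icc a b)), ∀ᵐ t ∂(volume.restrict (Icc a b)), ∀ i j,
      |K (t, i) (s, j)| ≤ C * hker α (t - s)) :
    KBd ((volume.restrict (Icc a b)).prod (Measure.count : Measure (Fin m)))
      (fun x => ENNReal.ofReal (Real.exp (-(l * x.1))))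
      (ENNReal.ofReal (C * m * ∑ k, (1 / l) ^ (α k) * Real.Gamma (α k))) K := by
  have hS : 0 ≤ ∑ k, (1 / l) ^ (α k) * Real.Gamma (α k) := by
    refine Finset.sum_nonneg fun k _ => ?_
    have := Real.Gamma_pos_of_pos (hα k)
    positivity
  apply ae_prod_of
  filter_upwards [h] with s hs j
  calc ∫⁻ x, ‖K x (s, j)‖ₑ * ENNReal.ofReal (Real.exp (-(l * x.1)))
        ∂((volume.restrict (Icc a b)).prod (Measure.count : Measure (Fin m)))
      ≤ ∫⁻ x, ENNReal.ofReal (C * hker α (x.1 - s)) * ENNReal.ofReal (Real.exp (-(l * x.1)))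
        ∂((volume.restrict (Icc a b)).prod (Measure.count : Measure (Fin m))) := by
        apply lintegral_mono_ae
        apply ae_prod_of
        filter_upwards [hs] with t ht i
        gcongr
        rw [Real.enorm_eq_ofReal_abs]
        exact ENNReal.ofReal_le_ofReal (ht i j)
    _ = ∫⁻ t in Icc a b, m * (ENNReal.ofReal (C * hker α (t - s)) *
          ENNReal.ofReal (Real.exp (-(l * t)))) := by
        rw [lintegral_prod]
        · simp [mul_comm]
        · apply Measurable.aemeasurable
          have := hker_meas α
          fun_prop
    _ ≤ ∫⁻ t, m * (ENNReal.ofReal (C * hker α (t - s)) *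
          ENNReal.ofReal (Real.exp (-(l * t)))) := setLIntegral_le_lintegral _ _
    _ = ∫⁻ t, (ENNReal.ofReal (C * m) * ENNReal.ofReal (Real.exp (-(l * s)))) *
          (fun u => ENNReal.ofReal (hker α u * Real.exp (-(l * u)))) (t - s) := by
        refine lintegral_congr fun t => ?_
        have e : Real.exp (-(l * t)) = Real.exp (-(l * s)) * Real.exp (-(l * (t - s))) := by
          rw [← Real.exp_add]; congr 1; ring
        have hk := hker_nonneg α (t - s)
        have e1 := Real.exp_pos (-(l * s))
        have e2 := Real.exp_pos (-(l * (t - s)))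
        rw [e, ← ENNReal.ofReal_natCast, ← ENNReal.ofReal_mul (by positivity),
          ← ENNReal.ofReal_mul (by positivity), ← ENNReal.ofReal_mul (by positivity),
          ← ENNReal.ofReal_mul (by positivity)]
        congr 1; ring
    _ = _ := by
        rw [lintegral_const_mul, lintegral_sub_right_eq_self
          (fun u => ENNReal.ofReal (hker α u * Real.exp (-(l * u)))), hker_laplace α hα hl,
          ENNReal.ofReal_mul (q := ∑ k, (1 / l) ^ (α k) * Real.Gamma (α k)) (by positivity)]
        · ring
        · have := hker_meas α
          fun_prop

/-- converting an integral over the product to an interval integral -/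
lemma integral_conv {m : ℕ} {a b s t : ℝ} (has : a ≤ s) (hst : s < t) (htb : t ≤ b)
    {F : ℝ × Fin m → ℝ}
    (hF : Integrable F ((volume.restrict (Icc a b)).prod (Measure.count : Measure (Fin m))))
    (h0 : ∀ τ k, τ ∉ Ioo s t → F (τ, k) = 0) {g : ℝ → ℝ}
    (hg : ∀ τ ∈ Ioo s t, ∑ k, F (τ, k) = g τ) :
    ∫ x, F x ∂((volume.restrict (Icc a b)).prod (Measure.count : Measure (Fin m)))
      = ∫ τ in s..t, g τ := by
  rw [integral_prod _ hF, intervalIntegral.integral_of_le hst.le, integral_Ioc_eq_integral_Ioo]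
  simp only [integral_count]
  have hsub : Ioo s t ⊆ Icc a b := fun x hx => ⟨has.trans hx.1.le, hx.2.le.trans htb⟩
  rw [← integral_indicator measurableSet_Icc, ← integral_indicator measurableSet_Ioo]
  refine integral_congr_ae (Filter.Eventually.of_forall fun τ => ?_)
  by_cases hτ : τ ∈ Ioo s t
  · simp [hτ, hsub hτ, hg τ hτ]
  · have : ∑ k, F (τ, k) = 0 := Finset.sum_eq_zero fun k _ => h0 τ k hτ
    simp only [indicator, hτ, this, if_false, ite_self]

end concretePart

lemma core_duality (a b : ℝ) (m : ℕ)
    (α : Fin m → ℝ) (hα : ∀ i, 0 < α i)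
    (A : ℝ → Matrix (Fin m) (Fin m) ℝ)
    (hAmeas : ∀ i j, Measurable fun t => A t i j) (M : ℝ)
    (hA : ∀ᵐ t ∂(volume.restrict (Set.Icc a b)), ∀ i j, |A t i j| ≤ M)
    (Z : ℝ → ℝ → Matrix (Fin m) (Fin m) ℝ)
    (hZmeas : ∀ i j, Measurable fun p : ℝ × ℝ => Z p.1 p.2 i j)
    (hZeq : ∀ᵐ s ∂(volume.restrict (Set.Icc a b)), ∀ᵐ t ∂(volume.restrict (Set.Icc a b)),
      s < t → ∀ i j,
      Z t s i j = (t - s) ^ (α i - 1) / Real.Gamma (α i) * (if i = j then (1:ℝ) else 0)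
        + (1 / Real.Gamma (α i)) *
            ∫ τ in s..t, (t - τ) ^ (α i - 1) * ∑ k, A τ i k * Z τ s k j)
    (Θ : ℝ) (hΘ : 0 ≤ Θ)
    (hZbdd : ∀ᵐ s ∂(volume.restrict (Set.Icc a b)), ∀ᵐ t ∂(volume.restrict (Set.Icc a b)),
      s < t → ∀ i j, |Z t s i j| ≤ (t - s) ^ (α i - 1) * Θ) :
    ∀ᵐ t ∂(volume.restrict (Set.Icc a b)), ∀ᵐ s ∂(volume.restrict (Set.Icc a b)),
      s < t → ∀ i j,
      Z t s i j = (t - s) ^ (α j - 1) / Real.Gamma (α j) * (if i = j then (1:ℝ) else 0)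
        + (1 / Real.Gamma (α j)) *
            ∫ τ in s..t, (τ - s) ^ (α j - 1) * ∑ k, Z t τ i k * A τ k j := by
  set ν := volume.restrict (Set.Icc a b) with hν
  set μ := ν.prod (Measure.count : Measure (Fin m)) with hμ
  have hmem : ∀ᵐ t ∂ν, t ∈ Icc a b := ae_restrict_mem measurableSet_Icc
  -- kernels
  let z : ℝ × Fin m → ℝ × Fin m → ℝ := fun x y => if y.1 < x.1 then Z x.1 y.1 x.2 y.2 else 0
  let φ : ℝ × Fin m → ℝ × Fin m → ℝ := fun x y =>
    if y.1 < x.1 then (x.1 - y.1) ^ (α x.2 - 1) / Real.Gamma (α x.2) *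
      (if x.2 = y.2 then (1:ℝ) else 0) else 0
  let P : ℝ × Fin m → ℝ × Fin m → ℝ := fun x y =>
    if y.1 < x.1 then (x.1 - y.1) ^ (α x.2 - 1) / Real.Gamma (α x.2) * A y.1 x.2 y.2 else 0
  let Q : ℝ × Fin m → ℝ × Fin m → ℝ := fun x y =>
    if y.1 < x.1 then A x.1 x.2 y.2 * ((x.1 - y.1) ^ (α y.2 - 1) / Real.Gamma (α y.2)) else 0
  have hkm : ∀ f : Fin m → Fin m → ℝ → ℝ → ℝ,
      (∀ i j, Measurable (fun p : ℝ × ℝ => f i j p.1 p.2)) →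
      Measurable (Function.uncurry (fun x y : ℝ × Fin m =>
        if y.1 < x.1 then f x.2 y.2 x.1 y.1 else 0)) := by
    intro f hf
    have h1 : Measurable (fun q : (Fin m × Fin m) × (ℝ × ℝ) => f q.1.1 q.1.2 q.2.1 q.2.2) :=
      measurable_from_prod_countable_right (fun ij => hf ij.1 ij.2)
    refine Measurable.ite (measurableSet_lt (by fun_prop) (by fun_prop)) ?_ measurable_const
    exact h1.comp (g := fun q : (Fin m × Fin m) × (ℝ × ℝ) => f q.1.1 q.1.2 q.2.1 q.2.2)
      (f := fun p : (ℝ × Fin m) × (ℝ × Fin m) => ((p.1.2, p.2.2), (p.1.1, p.2.1))) (by fun_prop)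
  have hzm : Measurable (Function.uncurry z) := hkm (fun i j t s => Z t s i j) hZmeas
  have hφm : Measurable (Function.uncurry φ) :=
    hkm (fun i j t s => (t - s) ^ (α i - 1) / Real.Gamma (α i) * (if i = j then (1:ℝ) else 0))
      (fun i j => by fun_prop)
  have hPm : Measurable (Function.uncurry P) :=
    hkm (fun i j t s => (t - s) ^ (α i - 1) / Real.Gamma (α i) * A s i j)
      (fun i j => by
        have : Measurable (fun p : ℝ × ℝ => A p.2 i j) := (hAmeas i j).comp measurable_snd
        exact Measurable.mul (by fun_prop) this)
  have hQm : Measurable (Function.uncurry Q) :=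
    hkm (fun i j t s => A t i j * ((t - s) ^ (α j - 1) / Real.Gamma (α j)))
      (fun i j => by
        have : Measurable (fun p : ℝ × ℝ => A p.1 i j) := (hAmeas i j).comp measurable_fst
        exact Measurable.mul this (by fun_prop))
  -- constants
  set G : ℝ := ∑ k, 1 / Real.Gamma (α k) with hG
  have hGp : ∀ k, 0 < Real.Gamma (α k) := fun k => Real.Gamma_pos_of_pos (hα k)
  have hGle : ∀ k, 1 / Real.Gamma (α k) ≤ G := fun k =>
    Finset.single_le_sum (f := fun k => 1 / Real.Gamma (α k))
      (fun k _ => (one_div_pos.2 (hGp k)).le) (Finset.mem_univ k)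
  have hG0 : 0 ≤ G := Finset.sum_nonneg fun k _ => (one_div_pos.2 (hGp k)).le
  have hphi : ∀ (u : ℝ), 0 < u → ∀ k, |u ^ (α k - 1) / Real.Gamma (α k)| ≤ G * hker α u := by
    intro u hu k
    have h0 : 0 ≤ u ^ (α k - 1) := Real.rpow_nonneg hu.le _
    rw [abs_of_nonneg (div_nonneg h0 (hGp k).le), div_eq_mul_one_div, mul_comm]
    exact mul_le_mul (hGle k) (le_hker α hu k) h0 hG0
  -- choose l
  obtain ⟨l, hl, hlt⟩ : ∃ l : ℝ, 0 < l ∧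
      (G * |M|) * m * ∑ k, (1 / l) ^ (α k) * Real.Gamma (α k) < 1 := by
    have ht := (hker_tendsto α hα).const_mul ((G * |M|) * m)
    rw [mul_zero] at ht
    exact ((Filter.eventually_gt_atTop 0).and (ht.eventually (gt_mem_nhds one_pos))).exists
  have hbz := KBd_of_hker α hα (a := a) (b := b) hl (K := z) hΘ (by
    filter_upwards [hZbdd] with s hs
    filter_upwards [hs] with t ht i j
    simp only [z]
    split_ifs with h
    · refine (ht h i j).trans ?_
      rw [mul_comm]
      exact mul_le_mul_of_nonneg_left (le_hker α (sub_pos.2 h) i) hΘ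
    · simpa using mul_nonneg hΘ (hker_nonneg α _))
  have hbφ := KBd_of_hker α hα (a := a) (b := b) hl (K := φ) hG0 (by
    refine Filter.Eventually.of_forall fun s => Filter.Eventually.of_forall fun t i j => ?_
    have h0 := mul_nonneg hG0 (hker_nonneg α (t - s))
    simp only [φ]
    split_ifs with h h'
    · simpa using hphi _ (sub_pos.2 h) i
    · simpa using h0
    · simpa using h0)
  have hGM : 0 ≤ G * |M| := mul_nonneg hG0 (abs_nonneg _)
  have hbP := KBd_of_hker α hα (a := a) (b := b) hl (K := P) hGM (by
    filter_upwards [hA] with s hs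
    refine Filter.Eventually.of_forall fun t i j => ?_
    simp only [P]
    split_ifs with h
    · rw [abs_mul, mul_right_comm]
      exact mul_le_mul (hphi _ (sub_pos.2 h) i) ((hs i j).trans (le_abs_self M)) (abs_nonneg _)
        (mul_nonneg hG0 (hker_nonneg α _))
    · simpa using mul_nonneg hGM (hker_nonneg α (t - s)))
  have hbQ := KBd_of_hker α hα (a := a) (b := b) hl (K := Q) hGM (by
    refine Filter.Eventually.of_forall fun s => ?_
    filter_upwards [hA] with t ht i j
    simp only [Q]
    split_ifs with h
    · rw [abs_mul, mul_right_comm, mul_comm]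
      exact mul_le_mul (hphi _ (sub_pos.2 h) j) ((ht i j).trans (le_abs_self M)) (abs_nonneg _)
        (mul_nonneg hG0 (hker_nonneg α _))
    · simpa using mul_nonneg hGM (hker_nonneg α (t - s)))
  have hwm : Measurable (fun x : ℝ × Fin m => ENNReal.ofReal (Real.exp (-(l * x.1)))) := by
    fun_prop
  have hw0 : ∀ x : ℝ × Fin m, ENNReal.ofReal (Real.exp (-(l * x.1))) ≠ 0 := fun x => by
    simp [Real.exp_pos]
  have hwt : ∀ x : ℝ × Fin m, ENNReal.ofReal (Real.exp (-(l * x.1))) ≠ ⊤ := fun x =>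
    ENNReal.ofReal_ne_top
  have hCP1 : ENNReal.ofReal ((G * |M|) * m * ∑ k, (1 / l) ^ (α k) * Real.Gamma (α k)) < 1 := by
    rw [← ENNReal.ofReal_one]
    exact (ENNReal.ofReal_lt_ofReal_iff one_pos).2 hlt
  -- support facts
  have hsupp : ∀ (K L : ℝ × Fin m → ℝ × Fin m → ℝ),
      (∀ x y, ¬ y.1 < x.1 → K x y = 0) → (∀ x y, ¬ y.1 < x.1 → L x y = 0) →
      ∀ (t s : ℝ) (i j : Fin m) (τ : ℝ) (k : Fin m), τ ∉ Ioo s t →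
        K (t, i) (τ, k) * L (τ, k) (s, j) = 0 := by
    intro K L hK hL t s i j τ k hτ
    by_cases h1 : τ < t
    · have h2 : ¬ s < τ := fun h => hτ ⟨h, h1⟩
      rw [hL (τ, k) (s, j) h2, mul_zero]
    · rw [hK (t, i) (τ, k) h1, zero_mul]
  have sz : ∀ x y, ¬ y.1 < x.1 → z x y = 0 := fun x y h => if_neg h
  have sφ : ∀ x y, ¬ y.1 < x.1 → φ x y = 0 := fun x y h => if_neg h
  have sP : ∀ x y, ¬ y.1 < x.1 → P x y = 0 := fun x y h => if_neg h
  have sQ : ∀ x y, ¬ y.1 < x.1 → Q x y = 0 := fun x y h => if_neg h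
  have hzero : ∀ (K L : ℝ × Fin m → ℝ × Fin m → ℝ),
      (∀ x y, ¬ y.1 < x.1 → K x y = 0) → (∀ x y, ¬ y.1 < x.1 → L x y = 0) →
      ∀ (x y : ℝ × Fin m), ¬ y.1 < x.1 → ∫ u, K x u * L u y ∂μ = 0 := by
    intro K L hK hL x y h
    refine integral_eq_zero_of_ae (Filter.Eventually.of_forall fun u => ?_)
    refine hsupp K L hK hL x.1 y.1 x.2 y.2 u.1 u.2 ?_
    rintro ⟨h1, h2⟩
    exact h (h1.trans h2)
  have memμ : ∀ᵐ x ∂μ, x.1 ∈ Icc a b := ae_prod_of (by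
    filter_upwards [hmem] with t ht i using ht)
  have hPQ : ∀ᵐ y ∂μ, ∀ᵐ x ∂μ, ∫ u, P x u * φ u y ∂μ = ∫ u, φ x u * Q u y ∂μ := by
    filter_upwards [memμ,
      comp_integrable hPm hφm hwm hw0 hwt (ne_top_of_lt hCP1) ENNReal.ofReal_ne_top hbP hbφ,
      comp_integrable hφm hQm hwm hw0 hwt ENNReal.ofReal_ne_top ENNReal.ofReal_ne_top hbφ hbQ]
      with y hy h1 h2
    filter_upwards [memμ, h1, h2] with x hx g1 g2
    by_cases hlt : y.1 < x.1
    · rw [integral_conv (g := fun τ => (x.1 - τ) ^ (α x.2 - 1) / Real.Gamma (α x.2) *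
          A τ x.2 y.2 * ((τ - y.1) ^ (α y.2 - 1) / Real.Gamma (α y.2))) hy.1 hlt hx.2 g1
          (fun τ k h => hsupp P φ sP sφ x.1 y.1 x.2 y.2 τ k h),
        integral_conv (g := fun τ => (x.1 - τ) ^ (α x.2 - 1) / Real.Gamma (α x.2) *
          A τ x.2 y.2 * ((τ - y.1) ^ (α y.2 - 1) / Real.Gamma (α y.2))) hy.1 hlt hx.2 g2
          (fun τ k h => hsupp φ Q sφ sQ x.1 y.1 x.2 y.2 τ k h)]
      · intro τ hτ
        rw [Finset.sum_eq_single x.2]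
        · simp [φ, Q, hτ.1, hτ.2]; ring
        · intro k _ hk
          simp [φ, hk.symm]
        · simp
      · intro τ hτ
        rw [Finset.sum_eq_single y.2]
        · simp [φ, P, hτ.1, hτ.2]
        · intro k _ hk
          simp [φ, hk]
        · simp
    · rw [hzero P φ sP sφ x y hlt, hzero φ Q sφ sQ x y hlt]
  have hzeq : ∀ᵐ y ∂μ, ∀ᵐ x ∂μ, z x y = φ x y + ∫ u, P x u * z u y ∂μ := by
    have hZ2 : ∀ᵐ y ∂μ, ∀ᵐ x ∂μ, y.1 < x.1 → Z x.1 y.1 x.2 y.2 =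
        (x.1 - y.1) ^ (α x.2 - 1) / Real.Gamma (α x.2) * (if x.2 = y.2 then (1:ℝ) else 0)
        + (1 / Real.Gamma (α x.2)) *
            ∫ τ in y.1..x.1, (x.1 - τ) ^ (α x.2 - 1) * ∑ k, A τ x.2 k * Z τ y.1 k y.2 := by
      apply ae_prod_of
      filter_upwards [hZeq] with s hs j
      apply ae_prod_of
      filter_upwards [hs] with t ht i hst
      exact ht hst i j
    filter_upwards [memμ, hZ2,
      comp_integrable hPm hzm hwm hw0 hwt (ne_top_of_lt hCP1) ENNReal.ofReal_ne_top hbP hbz]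
      with y hy h1 h2
    filter_upwards [memμ, h1, h2] with x hx g1 g2
    by_cases hlt : y.1 < x.1
    · rw [integral_conv (g := fun τ => (1 / Real.Gamma (α x.2)) * ((x.1 - τ) ^ (α x.2 - 1) *
          ∑ k, A τ x.2 k * Z τ y.1 k y.2)) hy.1 hlt hx.2 g2
          (fun τ k h => hsupp P z sP sz x.1 y.1 x.2 y.2 τ k h)]
      · rw [intervalIntegral.integral_const_mul]
        simp only [z, φ, hlt, if_true]
        exact g1 hlt
      · intro τ hτ
        simp only [P, z, hτ.1, hτ.2, if_true, Finset.mul_sum]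
        refine Finset.sum_congr rfl fun k _ => ?_
        ring
    · rw [hzero P z sP sz x y hlt, sz x y hlt, sφ x y hlt, add_zero]
  have main := abstract_duality hzm hφm hPm hQm hwm hw0 hwt ENNReal.ofReal_ne_top
    ENNReal.ofReal_ne_top hCP1 ENNReal.ofReal_ne_top hbz hbφ hbP hbQ hPQ hzeq
  filter_upwards [ae_of_prod main, hmem] with t ht htm
  have ht' : ∀ᵐ s ∂ν, ∀ i j, z (t, i) (s, j) = φ (t, i) (s, j)
      + ∫ u, z (t, i) u * Q u (s, j) ∂μ ∧ Integrable (fun u => z (t, i) u * Q u (s, j)) μ := by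
    rw [ae_all_iff]
    exact fun i => ae_of_prod (ht i)
  filter_upwards [ht', hmem] with s hs hsm hlt i j
  obtain ⟨e, hi⟩ := hs i j
  rw [integral_conv (g := fun τ => (1 / Real.Gamma (α j)) * ((τ - s) ^ (α j - 1) *
      ∑ k, Z t τ i k * A τ k j)) hsm.1 hlt htm.2 hi
      (fun τ k h => hsupp z Q sz sQ t s i j τ k h)] at e
  · rw [intervalIntegral.integral_const_mul] at e
    simp only [z, φ, hlt, if_true] at e
    rw [e]
    by_cases hij : i = j
    · subst hij; rfl
    · simp [hij]
  · intro τ hτ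
    simp only [Q, z, hτ.1, hτ.2, if_true, Finset.mul_sum]
    refine Finset.sum_congr rfl fun k _ => ?_
    ring

theorem statement13 (a : ℝ) (I : Set ℝ)
    (haI : a ∈ I) (hIsub : I ⊆ Set.Ici a) (hIint : (interior I).Nonempty)
    (hIord : I.OrdConnected)
    (m : ℕ) (hm : 0 < m)
    (α : Fin m → ℝ) (hα : ∀ i, 0 < α i ∧ α i ≤ 1)
    (A : ℝ → Matrix (Fin m) (Fin m) ℝ)
    -- `A` is measurable and locally essentially bounded on `I`
    (hAmeas : ∀ i j, Measurable fun t => A t i j)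
    (hAbdd : ∀ b ∈ I, ∃ M : ℝ,
      ∀ᵐ t ∂(volume.restrict (Set.Icc a b)), ∀ i j, |A t i j| ≤ M)
    (Z : ℝ → ℝ → Matrix (Fin m) (Fin m) ℝ)
    (hZmeas : ∀ i j, Measurable fun p : ℝ × ℝ => Z p.1 p.2 i j)
    -- `Z` satisfies the left state-transition integral equation
    -- (row-constant multi-order: the `(i,j)` entry carries the order `α_i`)
    (hZeq : ∀ s ∈ I, ∀ᵐ t ∂(volume.restrict I), s < t → ∀ i j,
      Z t s i j = (t - s) ^ (α i - 1) / Real.Gamma (α i) * (if i = j then (1:ℝ) else 0)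
        + (1 / Real.Gamma (α i)) *
            ∫ τ in s..t, (t - τ) ^ (α i - 1) * ∑ k, A τ i k * Z τ s k j)
    -- the bound `|Z_{ij}(t,s)| ≤ (t-s)^{α_i - 1} Θ^b` on each `[a,b] ⊆ I`
    (hZbdd : ∀ b ∈ I, ∃ Θ : ℝ, 0 ≤ Θ ∧
      ∀ s ∈ Set.Ico a b, ∀ᵐ t ∂(volume.restrict I), s < t → t ≤ b → ∀ i j,
        |Z t s i j| ≤ (t - s) ^ (α i - 1) * Θ) :
    -- `Z` satisfies the right state-transition integral equation
    -- (transposed, column-constant multi-order: the `(i,j)` entry carries `α_j`)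
    ∀ᵐ t ∂(volume.restrict I), ∀ᵐ s ∂(volume.restrict I), s < t → ∀ i j,
      Z t s i j = (t - s) ^ (α j - 1) / Real.Gamma (α j) * (if i = j then (1:ℝ) else 0)
        + (1 / Real.Gamma (α j)) *
            ∫ τ in s..t, (τ - s) ^ (α j - 1) * ∑ k, Z t τ i k * A τ k j := by
  have key : ∀ b ∈ I, ∀ᵐ t ∂(volume.restrict (Set.Icc a b)),
      ∀ᵐ s ∂(volume.restrict (Set.Icc a b)), s < t → ∀ i j,
      Z t s i j = (t - s) ^ (α j - 1) / Real.Gamma (α j) * (if i = j then (1:ℝ) else 0)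
        + (1 / Real.Gamma (α j)) *
            ∫ τ in s..t, (τ - s) ^ (α j - 1) * ∑ k, Z t τ i k * A τ k j := by
    intro b hb
    obtain ⟨M, hM⟩ := hAbdd b hb
    obtain ⟨Θ, hΘ, hZb⟩ := hZbdd b hb
    have hsub : Icc a b ⊆ I := hIord.out haI hb
    refine core_duality a b m α (fun i => (hα i).1) A hAmeas M hM Z hZmeas ?_ Θ hΘ ?_
    · filter_upwards [ae_restrict_mem measurableSet_Icc] with s hs
      exact ae_restrict_of_ae_restrict_of_subset hsub (hZeq s (hsub hs))
    · filter_upwards [ae_restrict_mem measurableSet_Icc] with s hs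
      by_cases hsb : s < b
      · filter_upwards [ae_restrict_of_ae_restrict_of_subset hsub (hZb s ⟨hs.1, hsb⟩),
          ae_restrict_mem measurableSet_Icc] with t ht htm hst
        exact ht hst htm.2
      · filter_upwards [ae_restrict_mem measurableSet_Icc] with t htm hst
        exact absurd (hst.trans_le htm.2) hsb
  have hImeas : MeasurableSet I := hIord.measurableSet
  have key2 : ∀ᵐ t, ∀ q : ℚ, (q : ℝ) ∈ I → t ∈ Icc a (q : ℝ) →
      ∀ᵐ s ∂(volume.restrict (Set.Icc a (q : ℝ))), s < t → ∀ i j,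
      Z t s i j = (t - s) ^ (α j - 1) / Real.Gamma (α j) * (if i = j then (1:ℝ) else 0)
        + (1 / Real.Gamma (α j)) *
            ∫ τ in s..t, (τ - s) ^ (α j - 1) * ∑ k, Z t τ i k * A τ k j := by
    rw [ae_all_iff]
    intro q
    by_cases hq : (q : ℝ) ∈ I
    · filter_upwards [(ae_restrict_iff' measurableSet_Icc).1 (key q hq)] with t ht _ htm
      exact ht htm
    · exact Filter.Eventually.of_forall fun t h => absurd h hq
  have hmax : ∀ᵐ t : ℝ, ¬ (t ∈ I ∧ ∀ b ∈ I, b ≤ t) := by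
    have hsub : {t : ℝ | t ∈ I ∧ ∀ b ∈ I, b ≤ t}.Subsingleton := fun x hx y hy =>
      le_antisymm (hy.2 x hx.1) (hx.2 y hy.1)
    have h0 := hsub.measure_zero (volume : Measure ℝ)
    exact measure_eq_zero_iff_ae_notMem.1 h0
  rw [ae_restrict_iff' hImeas]
  filter_upwards [key2, hmax] with t ht hm' htI
  push Not at hm'
  obtain ⟨b, hbI, htb⟩ := hm' htI
  obtain ⟨q, hq1, hq2⟩ := exists_rat_btwn htb
  have hqI : (q : ℝ) ∈ I := hIord.out htI hbI ⟨hq1.le, hq2.le⟩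
  have h := ht q hqI ⟨hIsub htI, hq1.le⟩
  rw [ae_restrict_iff' measurableSet_Icc] at h
  rw [ae_restrict_iff' hImeas]
  filter_upwards [h] with s hs hsI hst
  exact hs ⟨hIsub hsI, (hst.trans hq1).le⟩ hst
end

section
/- Let a ∈ ℝ, let I_f be an interval with least element a, nonempty interior, and I_f ⊂ [a,∞), let Ω ⊂ ℝ^m be a nonempty open set, let α = (α₁,…,α_m) ∈ (0,1]^m, let q_a ∈ Ω, and let f : Ω × I_f → ℝ^m be a Carathéodory function that is bounded on compacts and locally Lipschitz continuous in its first variable. If (q,I) and (q',I') are two local solutions of the Caputo Cauchy problem ( _cD^{α_i}_{a+}[q_i] = f_i(q(·),·) a.e., q(a) = q_a ) with I ⊂ I', then q'(t) = q(t) for every t ∈ I; in particular any two local solutions agree on the intersection of their intervals. -/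
open MeasureTheory Set

/-- Left Riemann–Liouville fractional integral of order `α` with base point `a`
(for `α = 0` it is the identity). -/
noncomputable def rlInt (a α : ℝ) (q : ℝ → ℝ) (t : ℝ) : ℝ :=
  if α = 0 then q t else (1 / Real.Gamma α) * ∫ τ in a..t, (t - τ) ^ (α - 1) * q τ

/-- `I` is an interval with least element `a`, nonempty interior, and `I ⊆ [a,∞)`. -/
def IsIntervalFrom (a : ℝ) (I : Set ℝ) : Prop :=
  a ∈ I ∧ I ⊆ Set.Ici a ∧ (interior I).Nonempty ∧ I.OrdConnected

/-- `(q, I)` is a local solution of the Caputo Cauchy problem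
`_cD^{α_i}_{a+}[q_i] = F_i(q(·),·)` a.e., `q(a) = qa`, on the domain `Ω`:
`I ⊆ If` is an interval with least element `a` and nonempty interior, `q` is continuous
on `I` with values in `Ω` and `q(a) = qa`, and for each `i` the function
`I^{1-α_i}_{a+}[q_i - (qa)_i]` agrees a.e. on `I` with a locally absolutely continuous
function `t ↦ c + ∫_a^t h` whose derivative `h` (the Caputo fractional derivative of
`q_i`) equals `F_i(q(t), t)` for almost every `t ∈ I`. -/
def IsCaputoLocalSol (a : ℝ) (If : Set ℝ) {m : ℕ}
    (Ω : Set (EuclideanSpace ℝ (Fin m))) (α : Fin m → ℝ)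
    (qa : EuclideanSpace ℝ (Fin m))
    (F : EuclideanSpace ℝ (Fin m) → ℝ → EuclideanSpace ℝ (Fin m))
    (q : ℝ → EuclideanSpace ℝ (Fin m)) (I : Set ℝ) : Prop :=
  IsIntervalFrom a I ∧ I ⊆ If ∧ ContinuousOn q I ∧ (∀ t ∈ I, q t ∈ Ω) ∧ q a = qa ∧
  ∀ i, ∃ c : ℝ, ∃ h : ℝ → ℝ,
    (∀ b ∈ I, MeasureTheory.IntegrableOn h (Set.Icc a b)) ∧
    (∀ᵐ t ∂(MeasureTheory.volume.restrict I),
      rlInt a (1 - α i) (fun τ => q τ i - qa i) t = c + ∫ τ in a..t, h τ) ∧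
    (∀ᵐ t ∂(MeasureTheory.volume.restrict I), h t = F (q t) t i)

/-- `(q, I)` is a maximal local solution of the Caputo Cauchy problem:
every extension `(q', I')` of it satisfies `I' = I`. -/
def IsMaximalSol (a : ℝ) (If : Set ℝ) {m : ℕ}
    (Ω : Set (EuclideanSpace ℝ (Fin m))) (α : Fin m → ℝ)
    (qa : EuclideanSpace ℝ (Fin m))
    (F : EuclideanSpace ℝ (Fin m) → ℝ → EuclideanSpace ℝ (Fin m))
    (q : ℝ → EuclideanSpace ℝ (Fin m)) (I : Set ℝ) : Prop :=
  IsCaputoLocalSol a If Ω α qa F q I ∧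
  ∀ (q' : ℝ → EuclideanSpace ℝ (Fin m)) (I' : Set ℝ),
    IsCaputoLocalSol a If Ω α qa F q' I' → I ⊆ I' → Set.EqOn q' q I → I' = I

theorem betaKernel (α : ℝ) (h0 : 0 < α) (h1 : α < 1) : ∃ B > (0:ℝ), ∀ s T : ℝ, s < T →
    IntegrableOn (fun t => (T - t) ^ (α - 1) * (t - s) ^ (-α)) (Ioc s T) ∧
    ∫ t in s..T, (T - t) ^ (α - 1) * (t - s) ^ (-α) = B := by
  set k : ℝ → ℝ := fun x => (1 - x) ^ (α - 1) * x ^ (-α) with hk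
  have hkint : IntervalIntegrable k volume 0 1 := by
    have := Complex.betaIntegral_convergent (u := ((1 - α : ℝ) : ℂ)) (v := (α : ℂ))
      (by simpa using h1) (by simpa using h0)
    rw [intervalIntegrable_iff_integrableOn_Ioc_of_le zero_le_one] at this ⊢
    have h2 := this.norm
    refine Integrable.congr h2 ?_
    have h3 : ∀ᵐ x ∂(volume.restrict (Ioc (0:ℝ) 1)), x ∈ Ioc (0:ℝ) 1 :=
      ae_restrict_mem measurableSet_Ioc
    have h4 : ∀ᵐ x ∂(volume.restrict (Ioc (0:ℝ) 1)), x ≠ 1 :=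
      ae_restrict_of_ae (by simp [ae_iff])
    filter_upwards [h3, h4] with x hx hx1
    have hx1' : 0 < 1 - x := sub_pos.2 (lt_of_le_of_ne hx.2 hx1)
    have e : (1 : ℂ) - (x : ℂ) = ((1 - x : ℝ) : ℂ) := by push_cast; ring
    rw [norm_mul, e, Complex.norm_cpow_eq_rpow_re_of_pos hx.1,
      Complex.norm_cpow_eq_rpow_re_of_pos hx1']
    simp [hk, mul_comm]
  refine ⟨∫ x in (0:ℝ)..1, k x, ?_, ?_⟩
  · refine intervalIntegral.intervalIntegral_pos_of_pos_on hkint ?_ one_pos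
    intro x hx
    have := hx.1
    have : 0 < 1 - x := sub_pos.2 hx.2
    positivity
  · intro s T hsT
    have hd : 0 < T - s := sub_pos.2 hsT
    have key : ∀ t ∈ Ioc s T, (T - s)⁻¹ * k (t / (T - s) - s / (T - s)) =
        (T - t) ^ (α - 1) * (t - s) ^ (-α) := by
      intro t ht
      have e1 : t / (T - s) - s / (T - s) = (t - s) / (T - s) := by ring
      have e2 : 1 - (t - s) / (T - s) = (T - t) / (T - s) := by field_simp; ring
      simp only [hk]
      rw [e1, e2, Real.div_rpow (sub_nonneg.2 ht.2) hd.le, Real.div_rpow (sub_nonneg.2 ht.1.le) hd.le]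
      have : (T - s) ^ (α - 1) * (T - s) ^ (-α) = (T - s)⁻¹ := by
        rw [← Real.rpow_add hd, ← Real.rpow_neg_one]; congr 1; ring
      have p1 : 0 < (T - s) ^ (α - 1) := by positivity
      have p2 : 0 < (T - s) ^ (-α) := by positivity
      rw [← this]
      field_simp
    constructor
    · have i1 : IntervalIntegrable (fun t => (T - s)⁻¹ * k (t / (T - s) - s / (T - s))) volume s T := by
        apply IntervalIntegrable.const_mul
        have := (hkint.comp_sub_right (s / (T - s)))
        have h5 := this.comp_mul_right (c := (T - s)⁻¹) 
        convert h5 using 1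
        · field_simp
        · field_simp; ring
        · field_simp; ring
      rw [intervalIntegrable_iff_integrableOn_Ioc_of_le hsT.le] at i1
      exact i1.congr_fun key measurableSet_Ioc
    · rw [intervalIntegral.integral_of_le hsT.le, ← setIntegral_congr_fun measurableSet_Ioc key,
        ← intervalIntegral.integral_of_le hsT.le, intervalIntegral.integral_const_mul,
        intervalIntegral.integral_comp_div_sub _ hd.ne', smul_eq_mul, ← mul_assoc,
        inv_mul_cancel₀ hd.ne', one_mul]
      congr 1
      · ring
      · field_simp

theorem triSwap {a T : ℝ} (haT : a ≤ T) (K : ℝ → ℝ → ℝ) (v κ : ℝ → ℝ) (B : ℝ)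
    (hKm : Measurable (Function.uncurry K))
    (hK0 : ∀ t s, s < t → t ≤ T → 0 ≤ K t s)
    (hv : IntegrableOn v (Ioc a T))
    (hκm : Measurable κ) (hκB : ∀ s ∈ Ioc a T, |κ s| ≤ B)
    (hKi : ∀ s, s < T → IntegrableOn (fun t => K t s) (Ioc s T))
    (hKκ : ∀ s, s < T → ∫ t in s..T, K t s = κ s) :
    IntervalIntegrable (fun t => ∫ s in a..t, K t s * v s) volume a T ∧
    ∫ t in a..T, ∫ s in a..t, K t s * v s = ∫ s in a..T, κ s * v s := by
  set μ := volume.restrict (Ioc a T) with hμ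
  set k : ℝ → ℝ → ℝ := fun t s => ({p : ℝ × ℝ | p.2 < p.1}.indicator (Function.uncurry K)) (t, s)
    with hk
  have hset : MeasurableSet {p : ℝ × ℝ | p.2 < p.1} := measurableSet_lt measurable_snd measurable_fst
  have hkm : Measurable (Function.uncurry k) := hKm.indicator hset
  have hsec : ∀ s, ∀ t, k t s = (Ioi s).indicator (fun t => K t s) t := by
    intro s t; simp [hk, indicator, Function.uncurry]
  have hinter : ∀ s ∈ Ioc a T, Ioi s ∩ Ioc a T = Ioc s T := by
    intro s hs; ext t; simp only [mem_inter_iff, mem_Ioi, mem_Ioc]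
    constructor
    · rintro ⟨h, h', h''⟩; exact ⟨h, h''⟩
    · rintro ⟨h, h'⟩; exact ⟨h, hs.1.trans h, h'⟩
  have hmem : ∀ᵐ s ∂μ, s ∈ Ioo a T := by
    have h3 : ∀ᵐ x ∂μ, x ∈ Ioc a T := ae_restrict_mem measurableSet_Ioc
    have h4 : ∀ᵐ x ∂μ, x ≠ T := ae_restrict_of_ae (by simp [ae_iff])
    filter_upwards [h3, h4] with x h h' using ⟨h.1, lt_of_le_of_ne h.2 h'⟩
  have hki : ∀ s ∈ Ioo a T, Integrable (fun t => k t s) μ := by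
    intro s hs
    simp only [hsec]
    rw [integrable_indicator_iff measurableSet_Ioi, IntegrableOn, hμ,
      Measure.restrict_restrict measurableSet_Ioi, hinter s ⟨hs.1, hs.2.le⟩]
    exact hKi s hs.2
  have hkκ : ∀ s ∈ Ioo a T, ∫ t, k t s ∂μ = κ s := by
    intro s hs
    simp only [hsec]
    rw [integral_indicator measurableSet_Ioi, hμ,
      Measure.restrict_restrict measurableSet_Ioi, hinter s ⟨hs.1, hs.2.le⟩, ← hKκ s hs.2,
      intervalIntegral.integral_of_le hs.2.le]
  have hk0 : ∀ s t, t ≤ T → 0 ≤ k t s := by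
    intro s t ht
    rw [hsec]
    by_cases h : s < t
    · rw [indicator_of_mem (by exact h)]; exact hK0 t s h ht
    · rw [indicator_of_notMem (by exact h)]
  have hmain : Integrable (Function.uncurry fun t s => k t s * v s) (μ.prod μ) := by
    have hm : AEStronglyMeasurable (Function.uncurry fun t s => k t s * v s) (μ.prod μ) :=
      (hkm.aestronglyMeasurable).mul (hv.aestronglyMeasurable.comp_snd)
    rw [integrable_prod_iff' hm]
    constructor
    · filter_upwards [hmem] with s hs
      exact (hki s hs).mul_const (v s)
    · have : Integrable (fun s => κ s * ‖v s‖) μ := by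
        refine Integrable.bdd_mul (c := B) hv.norm hκm.aestronglyMeasurable ?_
        filter_upwards [hmem] with s hs
        exact hκB s ⟨hs.1, hs.2.le⟩
      refine this.congr ?_
      filter_upwards [hmem] with s hs
      simp only [Function.uncurry, norm_mul]
      rw [integral_mul_const, ← hkκ s hs]
      congr 1
      refine setIntegral_congr_fun measurableSet_Ioc fun t ht => ?_
      exact (Real.norm_of_nonneg (hk0 s t ht.2)).symm
  have hin : ∀ t ∈ Ioc a T, ∫ s, k t s * v s ∂μ = ∫ s in a..t, K t s * v s := by
    intro t ht
    have : (fun s => k t s * v s) = (Iio t).indicator (fun s => K t s * v s) := by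
      ext s
      by_cases h : s < t
      · rw [indicator_of_mem (by exact h), hsec, indicator_of_mem (by exact h)]
      · rw [indicator_of_notMem (by exact h), hsec, indicator_of_notMem (by exact h), zero_mul]
    rw [this, integral_indicator measurableSet_Iio, hμ, Measure.restrict_restrict measurableSet_Iio,
      intervalIntegral.integral_of_le ht.1.le, integral_Ioc_eq_integral_Ioo]
    congr 2
    ext s; simp only [mem_inter_iff, mem_Iio, mem_Ioc, mem_Ioo]
    constructor
    · rintro ⟨h, h', h''⟩; exact ⟨h', h⟩
    · rintro ⟨h, h'⟩; exact ⟨h', h, h'.le.trans ht.2⟩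
  constructor
  · rw [intervalIntegrable_iff_integrableOn_Ioc_of_le haT]
    exact IntegrableOn.congr_fun (hmain.integral_prod_left) hin measurableSet_Ioc
  · rw [intervalIntegral.integral_of_le haT, intervalIntegral.integral_of_le haT,
      ← setIntegral_congr_fun measurableSet_Ioc hin, integral_integral_swap hmain]
    refine integral_congr_ae ?_
    filter_upwards [hmem] with s hs
    rw [integral_mul_const, hkκ s hs]

/-- The kernel `(T-t)^(α-1)` integrates to `(T-s)^α/α`. -/
theorem powKernel (α : ℝ) (h0 : 0 < α) (s T : ℝ) (hsT : s ≤ T) :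
    IntegrableOn (fun t => (T - t) ^ (α - 1)) (Ioc s T) ∧
    ∫ t in s..T, (T - t) ^ (α - 1) = (T - s) ^ α / α := by
  constructor
  · rw [← intervalIntegrable_iff_integrableOn_Ioc_of_le hsT]
    have := (intervalIntegral.intervalIntegrable_rpow' (a := T - s) (b := 0) (r := α - 1)
      (by linarith)).comp_sub_left T
    simpa using this
  · rw [intervalIntegral.integral_comp_sub_left (fun x => x ^ (α - 1)) T, sub_self,
      integral_rpow (Or.inl (by linarith)), sub_add_cancel, Real.zero_rpow h0.ne', sub_zero]

theorem caputoInt1 (α : ℝ) (h0 : 0 < α) (h1 : α ≤ 1) : ∃ κ > (0:ℝ),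
    ∀ (a b c : ℝ) (u g : ℝ → ℝ), ContinuousOn u (Icc a b) → IntegrableOn g (Icc a b) →
    (∀ᵐ t ∂(volume.restrict (Icc a b)), rlInt a (1 - α) u t = c + ∫ τ in a..t, g τ) →
    ∀ T ∈ Icc a b, ∫ t in a..T, u t = κ * (c * (T - a) ^ α + ∫ s in a..T, (T - s) ^ α * g s) := by
  have hrhs : ∀ (a b c : ℝ) (g : ℝ → ℝ), IntegrableOn g (Icc a b) → ∀ T ∈ Icc a b,
      ∫ t in a..T, (T - t) ^ (α - 1) * (c + ∫ s in a..t, g s) =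
      α⁻¹ * (c * (T - a) ^ α + ∫ s in a..T, (T - s) ^ α * g s) := by
    intro a b c g hg T hT
    obtain ⟨hi, he⟩ := triSwap hT.1 (fun t _ => (T - t) ^ (α - 1)) g
      (fun s => (T - s) ^ α / α) ((T - a) ^ α / α)
      (by simp only [Function.uncurry_def]; fun_prop)
      (fun t s _ ht => Real.rpow_nonneg (sub_nonneg.2 ht) _)
      (hg.mono_set (Ioc_subset_Icc_self.trans (Icc_subset_Icc_right hT.2)))
      (by fun_prop)
      (by
        intro s hs
        have h2 : 0 ≤ T - s := sub_nonneg.2 hs.2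
        rw [abs_of_nonneg (by positivity)]
        have : T - s ≤ T - a := by linarith [hs.1]
        gcongr)
      (fun s hs => (powKernel α h0 s T hs.le).1)
      (fun s hs => (powKernel α h0 s T hs.le).2)
    obtain ⟨pi, pe⟩ := powKernel α h0 a T hT.1
    rw [← intervalIntegrable_iff_integrableOn_Ioc_of_le hT.1] at pi
    simp only [intervalIntegral.integral_const_mul] at hi he
    simp only [mul_add]
    rw [intervalIntegral.integral_add (pi.mul_const c) hi, intervalIntegral.integral_mul_const, pe, he,
      ← intervalIntegral.integral_const_mul]
    congr 1
    · ring
    · congr 1; ext s; ring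
  rcases h1.lt_or_eq with h1 | rfl
  · obtain ⟨B, hB, hBk⟩ := betaKernel α h0 h1
    have hG : 0 < Real.Gamma (1 - α) := Real.Gamma_pos_of_pos (by linarith)
    refine ⟨B⁻¹ * Real.Gamma (1 - α) * α⁻¹, by positivity, ?_⟩
    intro a b c u g hu hg hae T hT
    have hsub : Icc a T ⊆ Icc a b := Icc_subset_Icc_right hT.2
    obtain ⟨hi, he⟩ := triSwap hT.1 (fun t s => (T - t) ^ (α - 1) * (t - s) ^ (-α)) u
      (fun s => B) B
      (by simp only [Function.uncurry_def]; fun_prop)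
      (fun t s hs ht => by
        have h2 := sub_nonneg.2 ht
        have h3 := sub_pos.2 hs
        positivity)
      (((hu.mono hsub).integrableOn_Icc).mono_set Ioc_subset_Icc_self)
      measurable_const (fun s _ => by rw [abs_of_pos hB])
      (fun s hs => (hBk s T hs).1) (fun s hs => (hBk s T hs).2)
    rw [intervalIntegral.integral_const_mul] at he
    have hL : ∫ t in a..T, ∫ s in a..t, (T - t) ^ (α - 1) * (t - s) ^ (-α) * u s =
        ∫ t in a..T, Real.Gamma (1 - α) * ((T - t) ^ (α - 1) * (c + ∫ s in a..t, g s)) := by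
      rw [intervalIntegral.integral_of_le hT.1, intervalIntegral.integral_of_le hT.1]
      refine integral_congr_ae ?_
      have := ae_restrict_of_ae_restrict_of_subset (Ioc_subset_Icc_self.trans hsub) hae
      filter_upwards [this] with t ht
      rw [← ht, rlInt, if_neg (by linarith)]
      simp only [mul_assoc, intervalIntegral.integral_const_mul]
      have e : 1 - α - 1 = -α := by ring
      rw [e]
      field_simp
    rw [hL, intervalIntegral.integral_const_mul, hrhs a b c g hg T hT] at he
    rw [mul_assoc, mul_assoc, he, ← mul_assoc, inv_mul_cancel₀ hB.ne', one_mul]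
  · refine ⟨1, one_pos, ?_⟩
    intro a b c u g hu hg hae T hT
    have hsub : Icc a T ⊆ Icc a b := Icc_subset_Icc_right hT.2
    have := hrhs a b c g hg T hT
    rw [inv_one] at this
    rw [← this, intervalIntegral.integral_of_le hT.1, intervalIntegral.integral_of_le hT.1]
    refine integral_congr_ae ?_
    have := ae_restrict_of_ae_restrict_of_subset (Ioc_subset_Icc_self.trans hsub) hae
    filter_upwards [this] with t ht
    rw [← ht, rlInt, if_pos (by ring)]
    simp

theorem caputoInt (α : ℝ) (h0 : 0 < α) (h1 : α ≤ 1) : ∃ κ > (0:ℝ),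
    ∀ (a b c : ℝ) (u g : ℝ → ℝ), ContinuousOn u (Icc a b) → u a = 0 → IntegrableOn g (Icc a b) →
    (∀ᵐ t ∂(volume.restrict (Icc a b)), rlInt a (1 - α) u t = c + ∫ τ in a..t, g τ) →
    ∀ T ∈ Icc a b, ∫ t in a..T, u t = κ * ∫ s in a..T, (T - s) ^ α * g s := by
  obtain ⟨κ, hκ, H⟩ := caputoInt1 α h0 h1
  refine ⟨κ, hκ, ?_⟩
  intro a b c u g hu hua hg hae T hT
  have H' := H a b c u g hu hg hae
  rcases hT.1.eq_or_lt with rfl | haT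
  · simp
  have hab : a < b := haT.trans_le hT.2
  suffices hc : c = 0 by
    rw [H' T hT, hc]; simp
  by_contra hc
  have hc' : 0 < |c| := abs_pos.2 hc
  have hgi : IntegrableOn (fun s => |g s|) (Icc a b) := hg.norm
  have hcont : ContinuousOn (fun t => ∫ s in a..t, |g s|) (Icc a b) :=
    intervalIntegral.continuousOn_primitive_interval (by rwa [uIcc_of_le hab.le]) |>.mono
      (by rw [uIcc_of_le hab.le])
  have hn : (Icc a b) ∈ nhdsWithin a (Ioi a) :=
    Icc_mem_nhdsGT hab
  have hle : nhdsWithin a (Ioi a) ≤ nhdsWithin a (Icc a b) :=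
    nhdsWithin_le_iff.2 hn
  have l1 : Filter.Tendsto (fun t => ∫ s in a..t, |g s|) (nhdsWithin a (Ioi a)) (nhds 0) := by
    have := hcont a (left_mem_Icc.2 hab.le)
    rw [ContinuousWithinAt, intervalIntegral.integral_same] at this
    exact this.mono_left hle
  have l2 : ∀ᶠ t in nhdsWithin a (Icc a b), |u t| < κ * (|c| / 4) := by
    have := (hu a (left_mem_Icc.2 hab.le)).abs
    rw [ContinuousWithinAt, hua, abs_zero] at this
    exact this.eventually_lt_const (by positivity)
  obtain ⟨ε, hε, hu'⟩ := Metric.mem_nhdsWithin_iff.1 l2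
  have l3 : ∀ᶠ t in nhdsWithin a (Ioi a), ∫ s in a..t, |g s| < |c| / 4 :=
    l1.eventually_lt_const (by positivity)
  have l4 : ∀ᶠ t in nhdsWithin a (Ioi a), t ∈ Ioo a (a + min ε 1) :=
    Ioo_mem_nhdsGT (by simp [hε])
  obtain ⟨t, ht3, ht4, htab⟩ := (l3.and (l4.and hn)).exists
  have hd : 0 < t - a := sub_pos.2 ht4.1
  have hd1 : t - a ≤ 1 := by have := ht4.2; have := min_le_right ε 1; linarith
  have hdε : t - a < ε := by have := ht4.2; have := min_le_left ε 1; linarith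
  have e := H' t htab
  have b1 : |∫ s in a..t, u s| ≤ κ * (|c| / 4) * (t - a) ^ α := by
    have : ‖∫ s in a..t, u s‖ ≤ κ * (|c| / 4) * |t - a| := by
      refine intervalIntegral.norm_integral_le_of_norm_le_const fun s hs => ?_
      rw [uIoc_of_le ht4.1.le] at hs
      refine (hu' ⟨?_, hs.1.le, hs.2.trans htab.2⟩).le
      rw [Metric.mem_ball, Real.dist_eq, abs_of_pos (sub_pos.2 hs.1)]
      linarith [hs.2]
    rw [abs_of_pos hd] at this
    refine this.trans ?_
    gcongr
    calc t - a = (t - a) ^ (1:ℝ) := (Real.rpow_one _).symm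
      _ ≤ (t - a) ^ α := Real.rpow_le_rpow_of_exponent_ge hd hd1 h1
  have b2 : |∫ s in a..t, (t - s) ^ α * g s| ≤ (t - a) ^ α * (|c| / 4) := by
    have : ‖∫ s in a..t, (t - s) ^ α * g s‖ ≤ ∫ s in a..t, (t - a) ^ α * |g s| := by
      refine intervalIntegral.norm_integral_le_of_norm_le ht4.1.le ?_ ?_
      · refine Filter.Eventually.of_forall fun s hs => ?_
        have : 0 ≤ t - s := sub_nonneg.2 hs.2
        rw [norm_mul, Real.norm_of_nonneg (by positivity), Real.norm_eq_abs]
        have : t - s ≤ t - a := by linarith [hs.1]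
        gcongr
      · apply IntervalIntegrable.const_mul
        rw [intervalIntegrable_iff_integrableOn_Ioc_of_le ht4.1.le]
        exact hgi.mono_set (Ioc_subset_Icc_self.trans (Icc_subset_Icc_right htab.2))
    rw [intervalIntegral.integral_const_mul] at this
    refine this.trans ?_
    gcongr
  have hp : 0 < (t - a) ^ α := by positivity
  set P := (t - a) ^ α
  set X := ∫ s in a..t, (t - s) ^ α * g s
  set Y := ∫ s in a..t, u s
  have : κ * (|c| * P) ≤ κ * (|c| / 4) * P + κ * (P * (|c| / 4)) := by
    calc κ * (|c| * P) = |Y - κ * X| := by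
          rw [e]
          have : κ * (c * P + X) - κ * X = κ * (c * P) := by ring
          rw [this, abs_mul, abs_mul, abs_of_pos hκ, abs_of_pos hp]
      _ ≤ |Y| + |κ * X| := abs_sub _ _
      _ ≤ _ := by
          rw [abs_mul κ, abs_of_pos hκ]
          gcongr
  have : 0 < κ * P * |c| := by positivity
  nlinarith

theorem caputoBound (α κ : ℝ) (h0 : 0 < α) (hκ : 0 < κ) (a b t0 C : ℝ) (hC : 0 ≤ C) (u g : ℝ → ℝ)
    (hat : a ≤ t0) (htb : t0 < b) (hu : ContinuousOn u (Icc a b)) (hg : IntegrableOn g (Icc a b))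
    (H : ∀ T ∈ Icc a b, ∫ t in a..T, u t = κ * ∫ s in a..T, (T - s) ^ α * g s)
    (hg0 : ∀ᵐ s ∂(volume.restrict (Icc a t0)), g s = 0)
    (hgC : ∀ᵐ s ∂(volume.restrict (Icc t0 b)), |g s| ≤ C) :
    ∀ t ∈ Icc t0 b, |u t| ≤ κ * C * (b - t0) ^ α := by
  have hab : a < b := hat.trans_lt htb
  set p : ℝ → ℝ → ℝ := fun T s => (max (T - s) 0) ^ α with hp
  have hpc : ∀ T, Continuous (p T) := fun T =>
    (by fun_prop : Continuous fun s => max (T - s) 0).rpow_const (fun _ => Or.inr h0.le)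
  have hpmono : ∀ T0 T1 s, T0 ≤ T1 → p T0 s ≤ p T1 s := by
    intro T0 T1 s h
    simp only [hp]
    gcongr
  have hpi : ∀ T (w : ℝ → ℝ) c d, c ≤ T → T ≤ d → IntegrableOn w (Icc c d) →
      ∫ s in c..T, (T - s) ^ α * w s = ∫ s in c..d, p T s * w s := by
    intro T w c d h1 h2 hw
    have i0 : IntegrableOn (fun s => p T s * w s) (Icc c d) :=
      IntegrableOn.continuousOn_mul (hpc T).continuousOn hw isCompact_Icc
    have i1 : IntervalIntegrable (fun s => p T s * w s) volume c T := by
      rw [intervalIntegrable_iff_integrableOn_Ioc_of_le h1]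
      exact i0.mono_set (Ioc_subset_Icc_self.trans (Icc_subset_Icc_right h2))
    have i2 : IntervalIntegrable (fun s => p T s * w s) volume T d := by
      rw [intervalIntegrable_iff_integrableOn_Ioc_of_le h2]
      exact i0.mono_set (Ioc_subset_Icc_self.trans (Icc_subset_Icc_left h1))
    rw [← intervalIntegral.integral_add_adjacent_intervals i1 i2]
    have z : ∫ s in T..d, p T s * w s = 0 := by
      rw [intervalIntegral.integral_of_le h2]
      refine setIntegral_eq_zero_of_forall_eq_zero fun s hs => ?_
      simp only [hp]
      rw [max_eq_right (by linarith [hs.1]), Real.zero_rpow h0.ne', zero_mul]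
    rw [z, add_zero, intervalIntegral.integral_of_le h1, intervalIntegral.integral_of_le h1]
    refine setIntegral_congr_fun measurableSet_Ioc fun s hs => ?_
    simp only [hp]
    rw [max_eq_left (by linarith [hs.2])]
  have hgI : IntervalIntegrable g volume a b := by
    rw [intervalIntegrable_iff_integrableOn_Ioc_of_le hab.le]
    exact hg.mono_set Ioc_subset_Icc_self
  have hpg : ∀ T c d, c ∈ Icc a b → d ∈ Icc a b →
      IntervalIntegrable (fun s => p T s * g s) volume c d := by
    intro T c d hc hd
    refine (hgI.mono_set ?_).continuousOn_mul (hpc T).continuousOn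
    rw [uIcc_of_le hab.le]
    exact uIcc_subset_Icc hc hd
  have hata : t0 ∈ Icc a b := ⟨hat, htb.le⟩
  have hzero : ∀ T, ∫ s in a..b, p T s * g s = ∫ s in t0..b, p T s * g s := by
    intro T
    rw [← intervalIntegral.integral_add_adjacent_intervals
      (hpg T a t0 (left_mem_Icc.2 hab.le) hata) (hpg T t0 b hata (right_mem_Icc.2 hab.le))]
    have : ∫ s in a..t0, p T s * g s = 0 := by
      rw [intervalIntegral.integral_of_le hat]
      refine integral_eq_zero_of_ae ?_
      have := ae_restrict_of_ae_restrict_of_subset (Ioc_subset_Icc_self) hg0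
      filter_upwards [this] with s hs
      simp [hs]
    rw [this, zero_add]
  have hone : ∀ T ∈ Icc t0 b, ∫ s in t0..b, p T s = ∫ r in (0:ℝ)..(T - t0), r ^ α := by
    intro T hT
    have := hpi T (fun _ => 1) t0 b hT.1 hT.2 (by simp)
    simp only [mul_one] at this
    rw [← this, intervalIntegral.integral_comp_sub_left (fun x => x ^ α) T, sub_self]
  have huI : ∀ c d, c ∈ Icc a b → d ∈ Icc a b → IntervalIntegrable u volume c d := by
    intro c d hc hd
    exact (hu.mono (uIcc_subset_Icc hc hd)).intervalIntegrable
  have main : ∀ T0 ∈ Icc t0 b, ∀ T1 ∈ Icc t0 b, T0 ≤ T1 →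
      |(∫ t in a..T1, u t) - ∫ t in a..T0, u t| ≤ κ * C * (b - t0) ^ α * (T1 - T0) := by
    intro T0 hT0 T1 hT1 h01
    have m0 : T0 ∈ Icc a b := ⟨hat.trans hT0.1, hT0.2⟩
    have m1 : T1 ∈ Icc a b := ⟨hat.trans hT1.1, hT1.2⟩
    rw [H T0 m0, H T1 m1, hpi T0 g a b m0.1 m0.2 hg, hpi T1 g a b m1.1 m1.2 hg, hzero, hzero,
      ← mul_sub, ← intervalIntegral.integral_sub (hpg T1 t0 b hata (right_mem_Icc.2 hab.le))
        (hpg T0 t0 b hata (right_mem_Icc.2 hab.le)), abs_mul, abs_of_pos hκ]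
    have s1 : ‖∫ s in t0..b, (p T1 s * g s - p T0 s * g s)‖ ≤
        ∫ s in t0..b, C * (p T1 s - p T0 s) := by
      refine intervalIntegral.norm_integral_le_of_norm_le htb.le ?_ ?_
      · have := (ae_restrict_iff' measurableSet_Icc).1 hgC
        filter_upwards [this] with s hs hs'
        have h3 := hs (Ioc_subset_Icc_self hs')
        rw [← sub_mul, norm_mul, Real.norm_of_nonneg (sub_nonneg.2 (hpmono _ _ _ h01)), mul_comm,
          Real.norm_eq_abs]
        have := sub_nonneg.2 (hpmono _ _ s h01)
        gcongr
      · exact (((hpc T1).sub (hpc T0)).const_smul C).intervalIntegrable _ _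
    have s2 : ∫ s in t0..b, C * (p T1 s - p T0 s) ≤ C * ((b - t0) ^ α * (T1 - T0)) := by
      rw [intervalIntegral.integral_const_mul, intervalIntegral.integral_sub
        ((hpc T1).intervalIntegrable _ _) ((hpc T0).intervalIntegrable _ _), hone T1 hT1, hone T0 hT0]
      have ri : ∀ c d : ℝ, IntervalIntegrable (fun r : ℝ => r ^ α) volume c d := fun c d =>
        intervalIntegral.intervalIntegrable_rpow' (by linarith)
      rw [intervalIntegral.integral_interval_sub_left (ri _ _) (ri _ _)]
      have : ∫ r in (T0 - t0)..(T1 - t0), r ^ α ≤ ∫ r in (T0 - t0)..(T1 - t0), (b - t0) ^ α := by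
        refine intervalIntegral.integral_mono_on (by linarith) (ri _ _) (by simp) ?_
        intro r hr
        have : 0 ≤ r := by linarith [hr.1, hT0.1]
        have : r ≤ b - t0 := by linarith [hr.2, hT1.2]
        gcongr
      rw [intervalIntegral.integral_const, smul_eq_mul] at this
      have e : (T1 - t0 - (T0 - t0)) * (b - t0) ^ α = (b - t0) ^ α * (T1 - T0) := by ring
      rw [e] at this
      gcongr
    calc κ * |∫ s in t0..b, (p T1 s * g s - p T0 s * g s)| ≤ κ * (C * ((b - t0) ^ α * (T1 - T0))) := by
          gcongr; exact s1.trans s2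
      _ = _ := by ring
  have hD : 0 ≤ κ * C * (b - t0) ^ α := by
    have : 0 < b - t0 := sub_pos.2 htb
    positivity
  have hint : ∀ t ∈ Ioo t0 b, |u t| ≤ κ * C * (b - t0) ^ α := by
    intro t ht
    have hnb : Icc a b ∈ nhds t := Icc_mem_nhds (hat.trans_lt ht.1) ht.2
    have hder : HasDerivAt (fun T => ∫ s in a..T, u s) (u t) t := by
      refine intervalIntegral.integral_hasDerivAt_right
        (huI a t (left_mem_Icc.2 hab.le) (mem_of_mem_nhds hnb)) ?_ (hu.continuousAt hnb)
      exact ⟨Icc a b, hnb, hu.aestronglyMeasurable measurableSet_Icc⟩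
    refine hder.le_of_lip' hD ?_
    filter_upwards [Icc_mem_nhds ht.1 ht.2] with T hT
    have hti := Ioo_subset_Icc_self ht
    rcases le_total t T with h | h
    · have := main t hti T hT h
      rwa [Real.norm_eq_abs, Real.norm_eq_abs, abs_of_nonneg (sub_nonneg.2 h)]
    · have := main T hT t hti h
      rwa [Real.norm_eq_abs, Real.norm_eq_abs, abs_sub_comm T t, abs_of_nonneg (sub_nonneg.2 h),
        abs_sub_comm]
  intro t ht
  have hcl : closure (Ioo t0 b) = Icc t0 b := closure_Ioo htb.ne
  refine le_on_closure (s := Ioo t0 b) (f := fun t => |u t|) (g := fun _ => κ * C * (b - t0) ^ α)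
    hint ?_ continuousOn_const (by rwa [hcl])
  rw [hcl]
  exact (hu.mono (Icc_subset_Icc_left hat)).abs

/-- Exchange of quantifiers in the Lipschitz condition. -/
theorem lipUniform {m : ℕ} (F : EuclideanSpace ℝ (Fin m) → ℝ → EuclideanSpace ℝ (Fin m))
    (Ω B : Set (EuclideanSpace ℝ (Fin m))) (hBne : B.Nonempty) (hB : B ⊆ Ω) (L : ℝ) (μ : Measure ℝ)
    (hc : ∀ᵐ t ∂μ, ContinuousOn (fun x => F x t) Ω)
    (hl : ∀ x₁ ∈ B, ∀ x₂ ∈ B, ∀ᵐ τ ∂μ, ‖F x₂ τ - F x₁ τ‖ ≤ L * ‖x₂ - x₁‖) :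
    ∀ᵐ τ ∂μ, ∀ x₁ ∈ B, ∀ x₂ ∈ B, ‖F x₂ τ - F x₁ τ‖ ≤ L * ‖x₂ - x₁‖ := by
  haveI : Nonempty B := hBne.to_subtype
  have h1 : ∀ᵐ τ ∂μ, ∀ i j : ℕ,
      ‖F (TopologicalSpace.denseSeq B j) τ - F (TopologicalSpace.denseSeq B i) τ‖ ≤
        L * ‖((TopologicalSpace.denseSeq B j : B) : EuclideanSpace ℝ (Fin m)) -
          (TopologicalSpace.denseSeq B i : B)‖ := by
    rw [ae_all_iff]; intro i
    rw [ae_all_iff]; intro j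
    exact hl _ (Subtype.mem _) _ (Subtype.mem _)
  filter_upwards [h1, hc] with τ h hcτ
  have hcB : Continuous (fun x : B => F x τ) :=
    (continuousOn_iff_continuous_restrict.1 (hcτ.mono hB))
  have key : ∀ x₁ x₂ : B, ‖F x₂ τ - F x₁ τ‖ ≤
      L * ‖(x₂ : EuclideanSpace ℝ (Fin m)) - (x₁ : EuclideanSpace ℝ (Fin m))‖ := by
    intro x₁ x₂
    refine DenseRange.induction_on₂ (p := fun x₁ x₂ : B => ‖F x₂ τ - F x₁ τ‖ ≤
      L * ‖(x₂ : EuclideanSpace ℝ (Fin m)) - (x₁ : EuclideanSpace ℝ (Fin m))‖)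
      (TopologicalSpace.denseRange_denseSeq B) ?_ h x₁ x₂
    refine isClosed_le ?_ ?_
    · exact ((hcB.comp continuous_snd).sub (hcB.comp continuous_fst)).norm
    · fun_prop
  intro x₁ hx₁ x₂ hx₂
  exact key ⟨x₁, hx₁⟩ ⟨x₂, hx₂⟩

theorem norm_le_sum_coord {m : ℕ} (x : EuclideanSpace ℝ (Fin m)) : ‖x‖ ≤ ∑ i, |x i| := by
  have : x = ∑ i, EuclideanSpace.single i (x i) := by
    ext j
    simp [Finset.sum_apply, EuclideanSpace.single_apply]
  calc ‖x‖ = ‖∑ i, EuclideanSpace.single i (x i)‖ := by rw [← this]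
    _ ≤ ∑ i, ‖EuclideanSpace.single i (x i)‖ := norm_sum_le _ _
    _ = _ := by simp

/-- The local step: two solutions that agree up to `t0` agree slightly further. -/
theorem caputoStep {a : ℝ} {If : Set ℝ} {m : ℕ} {Ω : Set (EuclideanSpace ℝ (Fin m))}
    {α : Fin m → ℝ} (hα : ∀ i, 0 < α i ∧ α i ≤ 1) {qa : EuclideanSpace ℝ (Fin m)}
    {F : EuclideanSpace ℝ (Fin m) → ℝ → EuclideanSpace ℝ (Fin m)}
    (hFcont : ∀ᵐ t ∂(volume.restrict If), ContinuousOn (fun x => F x t) Ω)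
    (hlip : ∀ x ∈ Ω, ∀ t ∈ If, ∃ R > (0:ℝ), ∃ δ > (0:ℝ), ∃ L : ℝ, 0 ≤ L ∧
      Metric.closedBall x R ⊆ Ω ∧
      ∀ x₁ ∈ Metric.closedBall x R, ∀ x₂ ∈ Metric.closedBall x R,
        ∀ᵐ τ ∂(volume.restrict (Icc (t - δ) (t + δ) ∩ If)),
          ‖F x₂ τ - F x₁ τ‖ ≤ L * ‖x₂ - x₁‖)
    {q q' : ℝ → EuclideanSpace ℝ (Fin m)} {I I' : Set ℝ}
    (hq : IsCaputoLocalSol a If Ω α qa F q I) (hq' : IsCaputoLocalSol a If Ω α qa F q' I')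
    (hII : I ⊆ I') {t0 b : ℝ} (hat : a ≤ t0) (htb : t0 < b) (hb : b ∈ I)
    (heq : ∀ t ∈ Icc a t0, q' t = q t) :
    ∃ d ∈ Ioc t0 b, ∀ t ∈ Icc t0 d, q' t = q t := by
  obtain ⟨⟨haI, -, -, hord⟩, hIf, hqc, hqΩ, hqa, hs⟩ := hq
  obtain ⟨-, -, hqc', -, hqa', hs'⟩ := hq'
  have hIccI : Icc a b ⊆ I := hord.out haI hb
  have ht0I : t0 ∈ I := hIccI ⟨hat, htb.le⟩
  obtain ⟨R, hR, δ, hδ, L, hL, hBΩ, hLip⟩ := hlip (q t0) (hqΩ _ ht0I) t0 (hIf ht0I)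
  have hLipU := lipUniform F Ω (Metric.closedBall (q t0) R) ⟨_, Metric.mem_closedBall_self hR.le⟩
    hBΩ L _ (ae_restrict_of_ae_restrict_of_subset inter_subset_right hFcont) hLip
  choose κ hκ hK using fun i => caputoInt (α i) (hα i).1 (hα i).2
  choose c h hhi hhr hhF using hs
  choose c' h' hhi' hhr' hhF' using hs'
  have hcb : ContinuousOn q (Icc a b) := hqc.mono hIccI
  have hcb' : ContinuousOn q' (Icc a b) := hqc'.mono (hIccI.trans hII)
  have ht0ab : t0 ∈ Icc a b := ⟨hat, htb.le⟩
  have n1 : ∀ᶠ t in nhdsWithin t0 (Icc a b), q t ∈ Metric.closedBall (q t0) R :=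
    (hcb t0 ht0ab) (Metric.closedBall_mem_nhds _ hR)
  have n2 : ∀ᶠ t in nhdsWithin t0 (Icc a b), q' t ∈ Metric.closedBall (q t0) R := by
    refine (hcb' t0 ht0ab) ?_
    rw [heq t0 ⟨hat, le_rfl⟩]
    exact Metric.closedBall_mem_nhds _ hR
  obtain ⟨ε, hε, hεb⟩ := Metric.mem_nhdsWithin_iff.1 (n1.and n2)
  have n3 : ∀ᶠ d in nhdsWithin t0 (Ioi t0), ∑ i, κ i * L * (d - t0) ^ (α i) < 1 / 2 := by
    have hcont : Continuous (fun d : ℝ => ∑ i, κ i * L * (d - t0) ^ (α i)) := by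
      refine continuous_finsetSum _ fun i _ => ?_
      exact continuous_const.mul ((continuous_id.sub continuous_const).rpow_const
        fun _ => Or.inr (hα i).1.le)
    have : Filter.Tendsto (fun d : ℝ => ∑ i, κ i * L * (d - t0) ^ (α i)) (nhds t0) (nhds 0) := by
      have h0 := hcont.tendsto t0
      have z : ∑ i, κ i * L * (t0 - t0) ^ (α i) = 0 := by
        refine Finset.sum_eq_zero fun i _ => ?_
        rw [sub_self, Real.zero_rpow (hα i).1.ne', mul_zero]
      rwa [z] at h0
    exact (this.mono_left nhdsWithin_le_nhds).eventually_lt_const (by norm_num)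
  have n4 : ∀ᶠ d in nhdsWithin t0 (Ioi t0), d ∈ Ioo t0 (min b (t0 + min ε δ)) :=
    Ioo_mem_nhdsGT (by simp [hε, hδ, htb])
  obtain ⟨d, hd3, hd4⟩ := (n3.and n4).exists
  have htd : t0 < d := hd4.1
  have hdb : d < b := hd4.2.trans_le (min_le_left _ _)
  have hdε : d < t0 + ε :=
    hd4.2.trans_le ((min_le_right _ _).trans (by gcongr; exact min_le_left _ _))
  have hdδ : d < t0 + δ :=
    hd4.2.trans_le ((min_le_right _ _).trans (by gcongr; exact min_le_right _ _))
  have had : Icc a d ⊆ Icc a b := Icc_subset_Icc_right hdb.le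
  have hadI : Icc a d ⊆ I := had.trans hIccI
  have hdI : d ∈ I := hadI ⟨hat.trans htd.le, le_rfl⟩
  have hball : ∀ t ∈ Icc t0 d, q t ∈ Metric.closedBall (q t0) R ∧ q' t ∈ Metric.closedBall (q t0) R := by
    intro t ht
    refine hεb ⟨?_, hat.trans ht.1, ht.2.trans hdb.le⟩
    rw [Metric.mem_ball, Real.dist_eq, abs_of_nonneg (sub_nonneg.2 ht.1)]
    linarith [ht.2]
  obtain ⟨tm, htm, hmax⟩ := isCompact_Icc.exists_isMaxOn (nonempty_Icc.2 htd.le)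
    (((hcb'.sub hcb).mono (Icc_subset_Icc hat hdb.le)).norm)
  set S := ‖q' tm - q tm‖ with hS
  have hSle : ∀ t ∈ Icc t0 d, ‖q' t - q t‖ ≤ S := fun t ht => hmax ht
  have hcoord : ∀ i, ∀ t ∈ Icc t0 d, |q' t i - q t i| ≤ κ i * (L * S) * (d - t0) ^ (α i) := by
    intro i
    have ci : ∀ {p : ℝ → EuclideanSpace ℝ (Fin m)}, ContinuousOn p (Icc a b) →
        ContinuousOn (fun t => p t i) (Icc a d) := fun hp =>
      (EuclideanSpace.proj (𝕜 := ℝ) i).continuous.comp_continuousOn (hp.mono had)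
    have g1 := hhi i d hdI
    have g2 := hhi' i d (hII hdI)
    have H1 := hK i a d (c i) (fun τ => q τ i - qa i) (h i) ((ci hcb).sub continuousOn_const)
      (by simp [hqa]) g1 (ae_restrict_of_ae_restrict_of_subset hadI (hhr i))
    have H2 := hK i a d (c' i) (fun τ => q' τ i - qa i) (h' i) ((ci hcb').sub continuousOn_const)
      (by simp [hqa']) g2 (ae_restrict_of_ae_restrict_of_subset (hadI.trans hII) (hhr' i))
    have F1 := ae_restrict_of_ae_restrict_of_subset hadI (hhF i)
    have F2 := ae_restrict_of_ae_restrict_of_subset (hadI.trans hII) (hhF' i)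
    refine caputoBound (α i) (κ i) (hα i).1 (hκ i) a d t0 (L * S) (by positivity)
      (fun t => q' t i - q t i) (fun t => h' i t - h i t) hat htd ((ci hcb').sub (ci hcb))
      (g2.sub g1) ?_ ?_ ?_
    · intro T hT
      have hTs : uIcc a T ⊆ Icc a d := by rw [uIcc_of_le hT.1]; exact Icc_subset_Icc_right hT.2
      have U : ∀ {p : ℝ → EuclideanSpace ℝ (Fin m)}, ContinuousOn p (Icc a b) →
          IntervalIntegrable (fun t => p t i - qa i) volume a T := fun hp =>
        (((ci hp).sub continuousOn_const).mono hTs).intervalIntegrable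
      have V : ∀ {w : ℝ → ℝ}, IntegrableOn w (Icc a d) →
          IntervalIntegrable (fun s => (T - s) ^ (α i) * w s) volume a T := by
        intro w hw
        have : IntervalIntegrable w volume a T := by
          rw [intervalIntegrable_iff_integrableOn_Ioc_of_le hT.1]
          exact hw.mono_set (Ioc_subset_Icc_self.trans (Icc_subset_Icc_right hT.2))
        refine this.continuousOn_mul (Continuous.continuousOn ?_)
        exact (continuous_const.sub continuous_id).rpow_const fun _ => Or.inr (hα i).1.le
      have e1 : ∫ t in a..T, (q' t i - q t i) =
          (∫ t in a..T, (q' t i - qa i)) - ∫ t in a..T, (q t i - qa i) := by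
        rw [← intervalIntegral.integral_sub (U hcb') (U hcb)]
        simp
      rw [e1, H1 T hT, H2 T hT, ← mul_sub, ← intervalIntegral.integral_sub (V g2) (V g1)]
      simp only [mul_sub]
    · have hsub : Icc a t0 ⊆ Icc a d := Icc_subset_Icc_right htd.le
      filter_upwards [ae_restrict_of_ae_restrict_of_subset hsub F1,
        ae_restrict_of_ae_restrict_of_subset hsub F2, ae_restrict_mem measurableSet_Icc]
        with s h1 h2 hs
      rw [h1, h2, heq s hs, sub_self]
    · have hsub : Icc t0 d ⊆ Icc a d := Icc_subset_Icc_left hat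
      have hsub2 : Icc t0 d ⊆ Icc (t0 - δ) (t0 + δ) ∩ If := fun t ht =>
        ⟨⟨by linarith [ht.1], by linarith [ht.2]⟩, hIf (hadI (hsub ht))⟩
      filter_upwards [ae_restrict_of_ae_restrict_of_subset hsub F1,
        ae_restrict_of_ae_restrict_of_subset hsub F2, ae_restrict_mem measurableSet_Icc,
        ae_restrict_of_ae_restrict_of_subset hsub2 hLipU]
        with s h1 h2 hs hl
      rw [h1, h2]
      calc |F (q' s) s i - F (q s) s i| = ‖(F (q' s) s - F (q s) s) i‖ := by simp
        _ ≤ ‖F (q' s) s - F (q s) s‖ := PiLp.norm_apply_le _ i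
        _ ≤ L * ‖q' s - q s‖ := hl _ (hball s hs).1 _ (hball s hs).2
        _ ≤ L * S := by gcongr; exact hSle s hs
  have hS0 : S = 0 := by
    have h1 : S ≤ (∑ i, κ i * L * (d - t0) ^ (α i)) * S := by
      calc S ≤ ∑ i, |(q' tm - q tm) i| := norm_le_sum_coord _
        _ ≤ ∑ i, κ i * (L * S) * (d - t0) ^ (α i) :=
          Finset.sum_le_sum fun i _ => by simpa using hcoord i tm htm
        _ = _ := by rw [Finset.sum_mul]; exact Finset.sum_congr rfl fun i _ => by ring
    have h2 : 0 ≤ S := norm_nonneg _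
    nlinarith
  refine ⟨d, ⟨htd, hdb.le⟩, fun t ht => ?_⟩
  have := hSle t ht
  rw [hS0] at this
  exact sub_eq_zero.1 (norm_le_zero_iff.1 this)

theorem statement17 (a : ℝ) (If : Set ℝ)
    (haI : a ∈ If) (hIsub : If ⊆ Set.Ici a) (hIint : (interior If).Nonempty)
    (hIord : If.OrdConnected)
    (m : ℕ) (hm : 0 < m) (Ω : Set (EuclideanSpace ℝ (Fin m)))
    (hΩopen : IsOpen Ω) (hΩne : Ω.Nonempty)
    (α : Fin m → ℝ) (hα : ∀ i, 0 < α i ∧ α i ≤ 1)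
    (qa : EuclideanSpace ℝ (Fin m)) (hqa : qa ∈ Ω)
    (F : EuclideanSpace ℝ (Fin m) → ℝ → EuclideanSpace ℝ (Fin m))
    -- Carathéodory assumptions
    (hFmeas : ∀ x ∈ Ω, MeasureTheory.AEStronglyMeasurable (fun t => F x t)
      (MeasureTheory.volume.restrict If))
    (hFcont : ∀ᵐ t ∂(MeasureTheory.volume.restrict If), ContinuousOn (fun x => F x t) Ω)
    -- `F` is bounded on compacts
    (hbdd : ∀ K : Set (EuclideanSpace ℝ (Fin m)), K ⊆ Ω → IsCompact K →
      ∀ c ∈ If, ∀ d ∈ If, c ≤ d → ∃ M : ℝ, 0 ≤ M ∧ ∀ x ∈ K,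
        ∀ᵐ t ∂(MeasureTheory.volume.restrict (Set.Icc c d)), ‖F x t‖ ≤ M)
    -- `F` is locally Lipschitz continuous in its first variable
    (hlip : ∀ x ∈ Ω, ∀ t ∈ If, ∃ R > (0:ℝ), ∃ δ > (0:ℝ), ∃ L : ℝ, 0 ≤ L ∧
      Metric.closedBall x R ⊆ Ω ∧
      ∀ x₁ ∈ Metric.closedBall x R, ∀ x₂ ∈ Metric.closedBall x R,
        ∀ᵐ τ ∂(MeasureTheory.volume.restrict (Set.Icc (t - δ) (t + δ) ∩ If)),
          ‖F x₂ τ - F x₁ τ‖ ≤ L * ‖x₂ - x₁‖) :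
    ∀ (q : ℝ → EuclideanSpace ℝ (Fin m)) (I : Set ℝ)
      (q' : ℝ → EuclideanSpace ℝ (Fin m)) (I' : Set ℝ),
      IsCaputoLocalSol a If Ω α qa F q I → IsCaputoLocalSol a If Ω α qa F q' I' →
      I ⊆ I' → ∀ t ∈ I, q' t = q t := by
  intro q I q' I' hq hq' hII b hbI
  by_contra hne
  have haI' := hq.1.1
  have hqc := hq.2.2.1
  have hqc' := hq'.2.2.1
  have hIccI : Icc a b ⊆ I := hq.1.2.2.2.out haI' hbI
  have hab : a ≤ b := hq.1.2.1 hbI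
  set D : Set ℝ := {x ∈ Icc a b | q' x ≠ q x} with hD
  have hDne : D.Nonempty := ⟨b, ⟨hab, le_rfl⟩, hne⟩
  have hDbd : BddBelow D := ⟨a, fun x hx => hx.1.1⟩
  set t0 := sInf D with ht0
  have hat : a ≤ t0 := le_csInf hDne fun x hx => hx.1.1
  have ht0b : t0 ≤ b := csInf_le hDbd ⟨⟨hab, le_rfl⟩, hne⟩
  have hlt : ∀ t ∈ Ico a t0, q' t = q t := by
    intro t ht
    by_contra h
    exact absurd (csInf_le hDbd (show t ∈ D from ⟨⟨ht.1, ht.2.le.trans ht0b⟩, h⟩)) (not_le.2 ht.2)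
  have heq : ∀ t ∈ Icc a t0, q' t = q t := by
    rcases hat.eq_or_lt with h | h
    · intro t ht
      rw [← h, Icc_self, mem_singleton_iff] at ht
      rw [ht, hq.2.2.2.2.1, hq'.2.2.2.2.1]
    · have hsub : Icc a t0 ⊆ I := (Icc_subset_Icc_right ht0b).trans hIccI
      have := Set.EqOn.of_subset_closure (s := Ico a t0) (t := Icc a t0) (f := q') (g := q) hlt
        (hqc'.mono (hsub.trans hII)) (hqc.mono hsub) Ico_subset_Icc_self
        (by rw [closure_Ico h.ne])
      exact fun t ht => this ht
  have htb : t0 < b := lt_of_le_of_ne ht0b fun h => hne (heq b ⟨hab, h.ge⟩)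
  obtain ⟨d, hd, hdeq⟩ := caputoStep hα hFcont hlip hq hq' hII hat htb hbI heq
  have : d ≤ t0 := by
    refine le_csInf hDne fun x hx => ?_
    by_contra hxd
    have hxd := not_le.1 hxd
    refine hx.2 ?_
    rcases le_total x t0 with h | h
    · exact heq x ⟨hx.1.1, h⟩
    · exact hdeq x ⟨h, hxd.le⟩
  exact absurd hd.1 (not_lt.2 this)
end

section
/- Let a ∈ ℝ, let I_f be an interval with least element a, nonempty interior, and I_f ⊂ [a,∞), let Ω ⊂ ℝ^m be a nonempty open set, let α = (α₁,…,α_m) ∈ (0,1]^m, let q_a ∈ Ω, and let f : Ω × I_f → ℝ^m be a Carathéodory function that is bounded on compacts and locally Lipschitz continuous in its first variable. If (q,I) is a maximal solution of the Caputo Cauchy problem ( _cD^{α_i}_{a+}[q_i] = f_i(q(·),·) a.e., q(a) = q_a ) and (q,I) is not global (I ≠ I_f), then I = [a,b) for some b ∈ I_f with b > a, and q cannot be continuously extended at t = b with a value in Ω: there is no ξ ∈ Ω such that q(t) → ξ as t → b⁻. -/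
open MeasureTheory Set

/-! ### Scalar fractional calculus -/

/-- `u` is a.e. measurable and a.e. bounded by `M` on `[a,c]`. -/
def BddM (a c M : ℝ) (u : ℝ → ℝ) : Prop :=
  AEStronglyMeasurable u (volume.restrict (Icc a c)) ∧
    ∀ᵐ t ∂(volume.restrict (Icc a c)), |u t| ≤ M

lemma BddM.mono {a c M : ℝ} {u : ℝ → ℝ} (h : BddM a c M u) {x y : ℝ} (hx : a ≤ x) (hy : y ≤ c) :
    BddM x y M u :=
  ⟨h.1.mono_set (Icc_subset_Icc hx hy), ae_restrict_of_ae_restrict_of_subset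
    (Icc_subset_Icc hx hy) h.2⟩

lemma BddM.Ioc {a c M : ℝ} {u : ℝ → ℝ} (h : BddM a c M u) :
    AEStronglyMeasurable u (volume.restrict (Ioc a c)) ∧
    ∀ᵐ t ∂(volume.restrict (Ioc a c)), |u t| ≤ M :=
  ⟨h.1.mono_set Ioc_subset_Icc_self, ae_restrict_of_ae_restrict_of_subset
    Ioc_subset_Icc_self h.2⟩

lemma BddM.sub {a c M N : ℝ} {u v : ℝ → ℝ} (h : BddM a c M u) (h' : BddM a c N v) :
    BddM a c (M + N) (fun t => u t - v t) := by
  refine ⟨h.1.sub h'.1, ?_⟩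
  filter_upwards [h.2, h'.2] with t h1 h2
  exact (abs_sub _ _).trans (add_le_add h1 h2)

lemma BddM.of_cont {a c : ℝ} {u : ℝ → ℝ} (h : ContinuousOn u (Icc a c)) :
    ∃ M, BddM a c M u := by
  obtain ⟨M, hM⟩ := isCompact_Icc.exists_bound_of_continuousOn h
  exact ⟨M, h.aestronglyMeasurable measurableSet_Icc,
    ae_restrict_of_forall_mem measurableSet_Icc hM⟩

lemma ker_int {β : ℝ} (hβ : 0 < β) (t x y : ℝ) :
    IntervalIntegrable (fun τ => (t - τ) ^ (β - 1)) volume x y := by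
  have := (intervalIntegral.intervalIntegrable_rpow' (a := t - x) (b := t - y)
    (r := β - 1) (by linarith)).comp_sub_left t
  simpa using this

lemma ker_val {β : ℝ} (hβ : 0 < β) (t x y : ℝ) :
    ∫ τ in x..y, (t - τ) ^ (β - 1) = ((t - x) ^ β - (t - y) ^ β) / β := by
  rw [intervalIntegral.integral_comp_sub_left (fun s => s ^ (β - 1)) t,
    integral_rpow (Or.inl (by linarith))]
  simp

lemma ker_mul_int {β : ℝ} (hβ : 0 < β) {M : ℝ} {u : ℝ → ℝ} {x y : ℝ} (hxy : x ≤ y)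
    (hu : BddM x y M u) (t : ℝ) :
    IntervalIntegrable (fun τ => (t - τ) ^ (β - 1) * u τ) volume x y := by
  have h := ker_int hβ t x y
  rw [intervalIntegrable_iff_integrableOn_Ioc_of_le hxy] at h ⊢
  exact h.mul_bdd (c := M) hu.Ioc.1 hu.Ioc.2

lemma BddM.ii {M : ℝ} {u : ℝ → ℝ} {x y : ℝ} (hxy : x ≤ y)
    (hu : BddM x y M u) : IntervalIntegrable u volume x y := by
  have := ker_mul_int one_pos hxy hu 0
  simpa using this

lemma BddM.nonneg {a c M : ℝ} {u : ℝ → ℝ} (h : BddM a c M u) (hac : a < c) : 0 ≤ M := by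
  have : (volume.restrict (Icc a c)) ≠ 0 := by
    simp [Measure.restrict_eq_zero, hac]
  have : (ae (volume.restrict (Icc a c))).NeBot := ae_neBot.2 this
  obtain ⟨t, ht⟩ := h.2.exists
  exact (abs_nonneg _).trans ht

/-- basic bound on a piece -/
lemma ker_bound {β : ℝ} (hβ : 0 < β) {M : ℝ} {u : ℝ → ℝ} {s t : ℝ} (hst : s ≤ t)
    (hu : BddM s t M u) :
    |∫ τ in s..t, (t - τ) ^ (β - 1) * u τ| ≤ M / β * (t - s) ^ β := by
  have h := intervalIntegral.norm_integral_le_of_norm_le (μ := volume)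
    (f := fun τ => (t - τ) ^ (β - 1) * u τ) (g := fun τ => (t - τ) ^ (β - 1) * M) hst ?_
    ((ker_int hβ t s t).mul_const M)
  · rw [intervalIntegral.integral_mul_const, ker_val hβ] at h
    refine h.trans (le_of_eq ?_)
    rw [sub_self, Real.zero_rpow hβ.ne']
    ring
  · have := (ae_restrict_iff' measurableSet_Ioc).1 hu.Ioc.2
    filter_upwards [this] with τ h1 h2
    rw [Real.norm_eq_abs, abs_mul, abs_of_nonneg (Real.rpow_nonneg (by linarith [h2.2]) _)]
    exact mul_le_mul_of_nonneg_left (h1 h2) (Real.rpow_nonneg (by linarith [h2.2]) _)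

lemma holder_aux {β : ℝ} (hβ : 0 < β) (hβ1 : β ≤ 1) {a c M : ℝ} {u : ℝ → ℝ} (hu : BddM a c M u)
    {s t : ℝ} (has : a ≤ s) (hst : s ≤ t) (htc : t ≤ c) :
    |(∫ τ in a..t, (t - τ) ^ (β - 1) * u τ) - ∫ τ in a..s, (s - τ) ^ (β - 1) * u τ|
      ≤ 2 * M / β * (t - s) ^ β := by
  rcases hst.eq_or_lt with rfl | hlt
  · simp [Real.zero_rpow hβ.ne']
  have hM : 0 ≤ M := hu.nonneg (by linarith)
  have hus := hu.mono le_rfl (hst.trans htc)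
  have hut := hu.mono has htc
  have e1 : (∫ τ in a..t, (t - τ) ^ (β - 1) * u τ) = (∫ τ in a..s, (t - τ) ^ (β - 1) * u τ)
      + ∫ τ in s..t, (t - τ) ^ (β - 1) * u τ :=
    (intervalIntegral.integral_add_adjacent_intervals (ker_mul_int hβ has hus t)
      (ker_mul_int hβ hst hut t)).symm
  have e2 : (∫ τ in a..s, (t - τ) ^ (β - 1) * u τ) - (∫ τ in a..s, (s - τ) ^ (β - 1) * u τ)
      = ∫ τ in a..s, ((t - τ) ^ (β - 1) * u τ - (s - τ) ^ (β - 1) * u τ) :=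
    (intervalIntegral.integral_sub (ker_mul_int hβ has hus t) (ker_mul_int hβ has hus s)).symm
  have b1 := ker_bound hβ hst hut
  have b2 : |∫ τ in a..s, ((t - τ) ^ (β - 1) * u τ - (s - τ) ^ (β - 1) * u τ)|
      ≤ M / β * (t - s) ^ β := by
    have h := intervalIntegral.norm_integral_le_of_norm_le (μ := volume)
      (f := fun τ => (t - τ) ^ (β - 1) * u τ - (s - τ) ^ (β - 1) * u τ)
      (g := fun τ => ((s - τ) ^ (β - 1) - (t - τ) ^ (β - 1)) * M) has ?_
      (((ker_int hβ s a s).sub (ker_int hβ t a s)).mul_const M)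
    · rw [intervalIntegral.integral_mul_const, intervalIntegral.integral_sub (ker_int hβ s a s)
        (ker_int hβ t a s), ker_val hβ, ker_val hβ] at h
      refine h.trans ?_
      rw [sub_self, Real.zero_rpow hβ.ne']
      have : (s - a) ^ β ≤ (t - a) ^ β :=
        Real.rpow_le_rpow (by linarith) (by linarith) hβ.le
      have h2 : ((s - a) ^ β - 0) / β - ((t - a) ^ β - (t - s) ^ β) / β ≤ (t - s) ^ β / β := by
        rw [← sub_div]
        gcongr
        linarith
      calc _ ≤ (t - s) ^ β / β * M := mul_le_mul_of_nonneg_right h2 hM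
        _ = _ := by ring
    · have h0 := (ae_restrict_iff' measurableSet_Ioc).1 hus.Ioc.2
      have hne : ∀ᵐ τ : ℝ, τ ≠ s := by simp [ae_iff]
      filter_upwards [h0, hne] with τ h1 hne h2
      have hs : τ < s := lt_of_le_of_ne h2.2 hne
      have : (t - τ) ^ (β - 1) ≤ (s - τ) ^ (β - 1) :=
        Real.rpow_le_rpow_of_nonpos (by linarith) (by linarith) (by linarith)
      rw [← sub_mul, Real.norm_eq_abs, abs_mul, abs_sub_comm, abs_of_nonneg (by linarith)]
      exact mul_le_mul_of_nonneg_left (h1 h2) (by linarith)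
  rw [e1, add_sub_right_comm, e2]
  refine (abs_add_le _ _).trans ((add_le_add b2 b1).trans (le_of_eq ?_))
  ring

lemma rl_eq {a β : ℝ} (hβ : 0 < β) (u : ℝ → ℝ) (t : ℝ) :
    rlInt a β u t = (1 / Real.Gamma β) * ∫ τ in a..t, (t - τ) ^ (β - 1) * u τ := by
  rw [rlInt, if_neg hβ.ne']

lemma rl_zero (a : ℝ) (u : ℝ → ℝ) (t : ℝ) : rlInt a 0 u t = u t := by
  rw [rlInt, if_pos rfl]

lemma rl_one (a : ℝ) (u : ℝ → ℝ) (t : ℝ) : rlInt a 1 u t = ∫ τ in a..t, u τ := by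
  rw [rl_eq one_pos]; simp

lemma rl_holder {β : ℝ} (hβ : 0 < β) (hβ1 : β ≤ 1) {a c M : ℝ} {u : ℝ → ℝ} (hu : BddM a c M u)
    {s t : ℝ} (has : a ≤ s) (hst : s ≤ t) (htc : t ≤ c) :
    |rlInt a β u t - rlInt a β u s| ≤ 2 * M / β / Real.Gamma β * (t - s) ^ β := by
  rw [rl_eq hβ, rl_eq hβ, ← mul_sub, abs_mul, abs_of_pos (by
    have := Real.Gamma_pos_of_pos hβ; positivity)]
  have := holder_aux hβ hβ1 hu has hst htc
  calc _ ≤ 1 / Real.Gamma β * (2 * M / β * (t - s) ^ β) :=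
        mul_le_mul_of_nonneg_left this (by have := Real.Gamma_pos_of_pos hβ; positivity)
    _ = _ := by ring

lemma rl_cont {β : ℝ} (hβ : 0 < β) (hβ1 : β ≤ 1) {a c M : ℝ} {u : ℝ → ℝ} (hu : BddM a c M u) :
    ContinuousOn (rlInt a β u) (Icc a c) := by
  intro s hs
  set C := 2 * M / β / Real.Gamma β
  have key : ∀ t ∈ Icc a c, |rlInt a β u t - rlInt a β u s| ≤ C * |t - s| ^ β := by
    intro t ht
    rcases le_total s t with h | h
    · rw [abs_of_nonneg (sub_nonneg.2 h)]
      exact rl_holder hβ hβ1 hu hs.1 h ht.2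
    · rw [abs_sub_comm, abs_sub_comm t s, abs_of_nonneg (sub_nonneg.2 h)]
      exact rl_holder hβ hβ1 hu ht.1 h hs.2
  rw [ContinuousWithinAt, tendsto_iff_norm_sub_tendsto_zero]
  refine squeeze_zero' (Filter.Eventually.of_forall fun t => norm_nonneg _)
    (eventually_nhdsWithin_of_forall key) ?_
  have : Continuous fun t : ℝ => C * |t - s| ^ β := by
    refine continuous_const.mul (Continuous.rpow_const (by fun_prop) fun _ => Or.inr hβ.le)
  have h := (this.tendsto s).mono_left (nhdsWithin_le_nhds (s := Icc a c))
  simpa [Real.zero_rpow hβ.ne'] using h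

lemma rl_self {a β : ℝ} (hβ : 0 < β) (u : ℝ → ℝ) : rlInt a β u a = 0 := by
  rw [rl_eq hβ]; simp

lemma rl_congr {a β t : ℝ} (hat : a ≤ t) {u v : ℝ → ℝ}
    (h : ∀ᵐ τ ∂(volume.restrict (Icc a t)), u τ = v τ) (h' : u t = v t) :
    rlInt a β u t = rlInt a β v t := by
  by_cases hβ : β = 0
  · subst hβ; rw [rl_zero, rl_zero, h']
  · rw [rlInt, rlInt, if_neg hβ, if_neg hβ]
    congr 1
    apply intervalIntegral.integral_congr_ae
    have := (ae_restrict_iff' measurableSet_Icc).1 h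
    filter_upwards [this] with τ h1 h2
    rw [uIoc_of_le hat] at h2
    rw [h1 (Ioc_subset_Icc_self h2)]

lemma rl_sub {a β c M N : ℝ} (hβ : 0 < β) {u v : ℝ → ℝ} (hu : BddM a c M u) (hv : BddM a c N v)
    {t : ℝ} (ht : t ∈ Icc a c) :
    rlInt a β (fun τ => u τ - v τ) t = rlInt a β u t - rlInt a β v t := by
  rw [rl_eq hβ, rl_eq hβ, rl_eq hβ, ← mul_sub, ← intervalIntegral.integral_sub
    (ker_mul_int hβ ht.1 (hu.mono le_rfl ht.2) t) (ker_mul_int hβ ht.1 (hv.mono le_rfl ht.2) t)]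
  simp only [mul_sub]

lemma beta_val {β γ : ℝ} (hβ : 0 < β) (hγ : 0 < γ) (hs : β + γ = 1) {τ t : ℝ} (h : τ < t) :
    ∫ s in τ..t, (t - s) ^ (β - 1) * (s - τ) ^ (γ - 1) = Real.Gamma β * Real.Gamma γ := by
  have h1 := Complex.betaIntegral_scaled (γ : ℂ) (β : ℂ) (a := t - τ) (by linarith)
  have h2 := Complex.Gamma_mul_Gamma_eq_betaIntegral (s := (γ : ℂ)) (t := (β : ℂ))
    (by simpa) (by simpa)
  have e : (γ : ℂ) + β = 1 := by
    rw [← Complex.ofReal_add, add_comm, hs]; simp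
  rw [e] at h1 h2
  rw [Complex.Gamma_one, one_mul] at h2
  rw [← h2, sub_self, Complex.cpow_zero, one_mul] at h1
  have h3 : ∫ s in τ..t, (t - s) ^ (β - 1) * (s - τ) ^ (γ - 1)
      = ∫ x in (0 : ℝ)..(t - τ), x ^ (γ - 1) * (t - τ - x) ^ (β - 1) := by
    have := intervalIntegral.integral_comp_sub_right (a := τ) (b := t)
      (fun x : ℝ => x ^ (γ - 1) * (t - τ - x) ^ (β - 1)) τ
    rw [sub_self] at this
    rw [← this]
    congr 1
    ext s
    rw [mul_comm]
    congr 2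
    ring
  rw [h3]
  have h4 : ((∫ x in (0 : ℝ)..(t - τ), x ^ (γ - 1) * (t - τ - x) ^ (β - 1) : ℝ) : ℂ)
      = Complex.Gamma γ * Complex.Gamma β := by
    rw [← h1, ← intervalIntegral.integral_ofReal]
    apply intervalIntegral.integral_congr
    intro x hx
    rw [uIcc_of_le (by linarith)] at hx
    simp only
    rw [Complex.ofReal_mul, Complex.ofReal_cpow hx.1, Complex.ofReal_cpow (by linarith [hx.2])]
    push_cast
    rfl
  rw [Complex.Gamma_ofReal, Complex.Gamma_ofReal] at h4
  rw [mul_comm]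
  exact_mod_cast h4

lemma beta_int {β γ : ℝ} (hβ : 0 < β) (hγ : 0 < γ) (hs : β + γ = 1) {τ t : ℝ} (h : τ < t) :
    IntervalIntegrable (fun s => (t - s) ^ (β - 1) * (s - τ) ^ (γ - 1)) volume τ t := by
  apply intervalIntegral.intervalIntegrable_of_integral_ne_zero
  rw [beta_val hβ hγ hs h]
  exact (mul_pos (Real.Gamma_pos_of_pos hβ) (Real.Gamma_pos_of_pos hγ)).ne'

lemma semigroup_aux {β γ : ℝ} (hβ : 0 < β) (hγ : 0 < γ) (hs : β + γ = 1) {a t M : ℝ}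
    (hat : a ≤ t) {u : ℝ → ℝ} (hu : BddM a t M u) :
    ∫ s in a..t, (t - s) ^ (β - 1) * (∫ τ in a..s, (s - τ) ^ (γ - 1) * u τ)
      = Real.Gamma β * Real.Gamma γ * ∫ τ in a..t, u τ := by
  set μ := volume.restrict (Ioc a t) with hμ
  set B := Real.Gamma β * Real.Gamma γ with hB
  have hBpos : 0 < B := mul_pos (Real.Gamma_pos_of_pos hβ) (Real.Gamma_pos_of_pos hγ)
  -- the triangle kernel
  set k : ℝ → ℝ → ℝ := fun s τ => if τ < s then (t - s) ^ (β - 1) * (s - τ) ^ (γ - 1) else 0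
    with hk
  have hkm : Measurable (Function.uncurry k) := by
    apply Measurable.ite
    · exact measurableSet_lt measurable_snd measurable_fst
    · fun_prop
    · fun_prop
  have hk0 : ∀ τ ∈ Ioc a t, ∀ s ∈ Ioc a t, 0 ≤ k s τ := by
    intro τ hτ s hs
    simp only [hk]
    split_ifs with h
    · exact mul_nonneg (Real.rpow_nonneg (by linarith [hs.2]) _)
        (Real.rpow_nonneg (by linarith) _)
    · exact le_rfl
  have kind : ∀ τ, (fun s => k s τ) = (Ioi τ).indicator
      (fun s => (t - s) ^ (β - 1) * (s - τ) ^ (γ - 1)) := by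
    intro τ; ext s; simp [hk, indicator]
  have hinter : ∀ τ ∈ Ioc a t, Ioi τ ∩ Ioc a t = Ioc τ t := by
    intro τ hτ; ext s; simp only [mem_inter_iff, mem_Ioi, mem_Ioc]
    constructor
    · rintro ⟨h1, h2, h3⟩; exact ⟨h1, h3⟩
    · rintro ⟨h1, h2⟩; exact ⟨h1, hτ.1.trans h1, h2⟩
  have kval : ∀ τ ∈ Ioo a t, ∫ s, k s τ ∂μ = B := by
    intro τ hτ
    rw [kind, integral_indicator measurableSet_Ioi, hμ, Measure.restrict_restrict measurableSet_Ioi,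
      hinter τ (Ioo_subset_Ioc_self hτ), ← intervalIntegral.integral_of_le hτ.2.le,
      beta_val hβ hγ hs hτ.2]
  have kint : ∀ τ ∈ Ioo a t, Integrable (fun s => k s τ) μ := by
    intro τ hτ
    rw [kind, integrable_indicator_iff measurableSet_Ioi, IntegrableOn, hμ,
      Measure.restrict_restrict measurableSet_Ioi, hinter τ (Ioo_subset_Ioc_self hτ)]
    exact (intervalIntegrable_iff_integrableOn_Ioc_of_le hτ.2.le).1 (beta_int hβ hγ hs hτ.2)
  have hae : ∀ᵐ τ ∂μ, τ ∈ Ioo a t := by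
    rw [hμ, ← restrict_Ioo_eq_restrict_Ioc]
    exact ae_restrict_mem measurableSet_Ioo
  have hui : Integrable u μ := by
    rw [hμ]
    exact (intervalIntegrable_iff_integrableOn_Ioc_of_le hat).1 (hu.ii hat)
  have hint : Integrable (Function.uncurry fun s τ => k s τ * u τ) (μ.prod μ) := by
    rw [integrable_prod_iff']
    · constructor
      · filter_upwards [hae] with τ hτ
        exact (kint τ hτ).mul_const (u τ)
      · have : Integrable (fun τ => B * |u τ|) μ := hui.abs.const_mul B
        refine this.congr ?_
        filter_upwards [hae] with τ hτ
        have e : ∫ s, ‖Function.uncurry (fun s τ => k s τ * u τ) (s, τ)‖ ∂μ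
            = ∫ s, k s τ * |u τ| ∂μ := by
          apply integral_congr_ae
          filter_upwards [hae] with s hs
          simp only [Function.uncurry, norm_mul, Real.norm_eq_abs]
          rw [abs_of_nonneg (hk0 τ (Ioo_subset_Ioc_self hτ) s (Ioo_subset_Ioc_self hs))]
        rw [e, integral_mul_const, kval τ hτ]
    · exact hkm.aestronglyMeasurable.mul (hu.Ioc.1.comp_snd)
  have hswap := integral_integral_swap hint
  have e1 : ∫ s in a..t, (t - s) ^ (β - 1) * (∫ τ in a..s, (s - τ) ^ (γ - 1) * u τ)
      = ∫ s, ∫ τ, k s τ * u τ ∂μ ∂μ := by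
    rw [intervalIntegral.integral_of_le hat]
    apply integral_congr_ae
    filter_upwards [hae] with s hs
    have e2 : (fun τ => k s τ * u τ) = (Iio s).indicator
        (fun τ => (t - s) ^ (β - 1) * ((s - τ) ^ (γ - 1) * u τ)) := by
      ext τ
      simp only [hk, indicator, mem_Iio]
      split_ifs <;> ring
    have e3 : Iio s ∩ Ioc a t = Ioo a s := by
      ext τ; simp only [mem_inter_iff, mem_Iio, mem_Ioc, mem_Ioo]
      constructor
      · rintro ⟨h1, h2, h3⟩; exact ⟨h2, h1⟩
      · rintro ⟨h1, h2⟩; exact ⟨h2, h1, (h2.trans hs.2).le⟩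
    rw [e2, integral_indicator measurableSet_Iio, hμ, Measure.restrict_restrict measurableSet_Iio,
      e3, integral_const_mul, restrict_Ioo_eq_restrict_Ioc,
      ← intervalIntegral.integral_of_le hs.1.le]
  rw [e1, hswap, intervalIntegral.integral_of_le hat, ← integral_const_mul]
  apply integral_congr_ae
  filter_upwards [hae] with τ hτ
  rw [integral_mul_const, kval τ hτ]

lemma semigroup {β γ : ℝ} (hβ : 0 < β) (hγ : 0 < γ) (hs : β + γ = 1) {a t M : ℝ}
    (hat : a ≤ t) {u : ℝ → ℝ} (hu : BddM a t M u) :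
    rlInt a β (rlInt a γ u) t = ∫ τ in a..t, u τ := by
  have h := semigroup_aux hβ hγ hs hat hu
  have hg := (Real.Gamma_pos_of_pos hβ).ne'
  have hg' := (Real.Gamma_pos_of_pos hγ).ne'
  rw [rl_eq hβ]
  simp only [rl_eq hγ]
  have : ∀ s, (t - s) ^ (β - 1) * (1 / Real.Gamma γ * ∫ τ in a..s, (s - τ) ^ (γ - 1) * u τ)
    = (1 / Real.Gamma γ) * ((t - s) ^ (β - 1) * ∫ τ in a..s, (s - τ) ^ (γ - 1) * u τ) := by
    intro s; ring
  simp only [this]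
  rw [intervalIntegral.integral_const_mul, h]
  field_simp

/-- Volterra form implies the Caputo form. -/
lemma caputo_of_volterra {α : ℝ} (hα : 0 < α) (hα1 : α ≤ 1) {a c M : ℝ}
    {g h : ℝ → ℝ} (hh : BddM a c M h) (hg : ∀ t ∈ Icc a c, g t = rlInt a α h t) :
    ∀ t ∈ Icc a c, rlInt a (1 - α) g t = ∫ τ in a..t, h τ := by
  intro t ht
  rcases hα1.eq_or_lt with rfl | hlt
  · rw [sub_self, rl_zero, hg t ht, rl_one]
  · rw [← semigroup (β := 1 - α) (γ := α) (by linarith) hα (by ring) ht.1 (hh.mono le_rfl ht.2)]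
    apply rl_congr ht.1 _ (hg t ht)
    exact ae_restrict_of_forall_mem measurableSet_Icc
      fun τ hτ => hg τ ⟨hτ.1, hτ.2.trans ht.2⟩

lemma prim_cont {a c M : ℝ} {h : ℝ → ℝ} (hh : BddM a c M h) :
    ContinuousOn (fun t => ∫ τ in a..t, h τ) (Icc a c) := by
  have := rl_cont one_pos le_rfl hh
  refine this.congr fun t _ => (rl_one a h t).symm

lemma zero_of_prim {a c : ℝ} (hac : a < c) {w : ℝ → ℝ} (hw : ContinuousOn w (Icc a c))
    (h : ∀ t ∈ Icc a c, ∫ τ in a..t, w τ = 0) : ∀ t ∈ Icc a c, w t = 0 := by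
  set W := IccExtend hac.le (domRestrict (Icc a c) w) with hW
  have hWc : Continuous W := (continuousOn_iff_continuous_domRestrict.1 hw).Icc_extend'
  have hWe : ∀ t ∈ Icc a c, W t = w t := by
    intro t ht; rw [hW, IccExtend_of_mem _ _ ht]; rfl
  have h0 : ∀ t ∈ Ioo a c, W t = 0 := by
    intro t ht
    have d := (intervalIntegral.integral_hasDerivAt_right (hWc.intervalIntegrable a t)
      hWc.stronglyMeasurable.stronglyMeasurableAtFilter hWc.continuousAt)
    have d0 : HasDerivAt (fun t => ∫ τ in a..t, W τ) 0 t := by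
      refine (hasDerivAt_const t (0 : ℝ)).congr_of_eventuallyEq ?_
      filter_upwards [Ioo_mem_nhds ht.1 ht.2] with x hx
      rw [← h x (Ioo_subset_Icc_self hx)]
      apply intervalIntegral.integral_congr
      intro y hy
      rw [uIcc_of_le hx.1.le] at hy
      exact hWe y ⟨hy.1, hy.2.trans hx.2.le⟩
    exact d.unique d0
  intro t ht
  rw [← hWe t ht]
  have hcl : IsClosed {t | W t = 0} := isClosed_eq hWc continuous_const
  have : closure (Ioo a c) ⊆ {t | W t = 0} := hcl.closure_subset_iff.2 h0
  rw [closure_Ioo hac.ne] at this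
  exact this ht

/-- The Caputo form implies the Volterra form. -/
lemma volterra_of_caputo {α : ℝ} (hα : 0 < α) (hα1 : α ≤ 1) {a c M d : ℝ} (hac : a < c)
    {g h : ℝ → ℝ} (hh : BddM a c M h) (hgc : ContinuousOn g (Icc a c)) (hga : g a = 0)
    (hg : ∀ᵐ t ∂(volume.restrict (Icc a c)), rlInt a (1 - α) g t = d + ∫ τ in a..t, h τ) :
    ∀ t ∈ Icc a c, g t = rlInt a α h t := by
  obtain ⟨N, hN⟩ := BddM.of_cont hgc
  have hcont : ContinuousOn (rlInt a (1 - α) g) (Icc a c) := by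
    rcases hα1.eq_or_lt with rfl | hlt
    · refine hgc.congr fun t _ => ?_
      rw [sub_self, rl_zero]
    · exact rl_cont (by linarith) (by linarith) hN
  have hE := Measure.eqOn_Icc_of_ae_eq volume hac.ne hg hcont
    (continuousOn_const.add (prim_cont hh))
  have hd : d = 0 := by
    have := hE (left_mem_Icc.2 hac.le)
    simp only [intervalIntegral.integral_same, add_zero] at this
    rw [← this]
    rcases hα1.eq_or_lt with rfl | hlt
    · rw [sub_self, rl_zero, hga]
    · exact rl_self (by linarith) g
  subst hd
  rcases hα1.eq_or_lt with rfl | hlt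
  · intro t ht
    have := hE ht
    simp only [sub_self, rl_zero, zero_add] at this
    rw [this, rl_one]
  · have hrc := rl_cont hα hα1 hh
    obtain ⟨N', hN'⟩ := BddM.of_cont hrc
    have hw : ContinuousOn (fun t => g t - rlInt a α h t) (Icc a c) := hgc.sub hrc
    have hwB := hN.sub hN'
    have hz : ∀ t ∈ Icc a c, rlInt a (1 - α) (fun t => g t - rlInt a α h t) t = 0 := by
      intro t ht
      rw [rl_sub (by linarith) hN hN' ht, hE ht, semigroup (by linarith) hα (by ring) ht.1
        (hh.mono le_rfl ht.2)]
      simp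
    have := zero_of_prim hac hw ?_
    · intro t ht
      exact sub_eq_zero.1 (this t ht)
    · intro t ht
      rw [← semigroup (β := α) (γ := 1 - α) hα (by linarith) (by ring) ht.1
        (hwB.mono le_rfl ht.2)]
      rw [rl_congr (v := fun _ => 0) ht.1 _ (hz t ht)]
      · rw [rl_eq hα]; simp
      · exact ae_restrict_of_forall_mem measurableSet_Icc
          fun τ hτ => hz τ ⟨hτ.1, hτ.2.trans ht.2⟩

/-! ### Carathéodory functions -/

lemma ae_forall_le {X : Type*} [TopologicalSpace X] [TopologicalSpace.SeparableSpace X]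
    {μ : Measure ℝ} {φ : X → ℝ → ℝ} {ψ : X → ℝ} (hψ : Continuous ψ)
    (h : ∀ x, ∀ᵐ t ∂μ, φ x t ≤ ψ x) (hc : ∀ᵐ t ∂μ, Continuous fun x => φ x t) :
    ∀ᵐ t ∂μ, ∀ x, φ x t ≤ ψ x := by
  obtain ⟨D, hD, hDd⟩ := TopologicalSpace.exists_countable_dense X
  have h1 : ∀ᵐ t ∂μ, ∀ x ∈ D, φ x t ≤ ψ x := (ae_ball_iff hD).2 fun x _ => h x
  filter_upwards [h1, hc] with t h1 h2 x
  have hcl : IsClosed {x | φ x t ≤ ψ x} := isClosed_le h2 hψ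
  exact (hcl.closure_subset_iff.2 h1) (hDd x)

lemma nemytskii {m : ℕ} {Ω : Set (EuclideanSpace ℝ (Fin m))} {μ : Measure ℝ}
    {F : EuclideanSpace ℝ (Fin m) → ℝ → EuclideanSpace ℝ (Fin m)}
    (hFmeas : ∀ x ∈ Ω, AEStronglyMeasurable (fun t => F x t) μ)
    (hFcont : ∀ᵐ t ∂μ, ContinuousOn (fun x => F x t) Ω)
    {p : ℝ → EuclideanSpace ℝ (Fin m)} (hp : Continuous p) (hpΩ : ∀ t, p t ∈ Ω) :
    AEStronglyMeasurable (fun t => F (p t) t) μ := by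
  have h0 : p 0 ∈ Ω := hpΩ 0
  set P := fun n => SimpleFunc.approxOn p hp.measurable Ω (p 0) h0 n with hP
  refine aestronglyMeasurable_of_tendsto_ae Filter.atTop (f := fun n t => F (P n t) t) ?_ ?_
  · intro n
    have e : (fun t => F (P n t) t) = fun t => ∑ y ∈ (P n).range,
        ((P n) ⁻¹' {y}).indicator (fun t => F y t) t := by
      ext1 t
      rw [Finset.sum_eq_single (P n t)]
      · simp
      · intro y _ hy
        rw [indicator_of_notMem]
        simpa using hy.symm
      · intro h
        exact absurd (SimpleFunc.mem_range_self _ _) h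
    rw [e]
    refine Finset.aestronglyMeasurable_fun_sum _ fun y hy => ?_
    obtain ⟨t, rfl⟩ := SimpleFunc.mem_range.1 hy
    exact (hFmeas _ (SimpleFunc.approxOn_mem hp.measurable h0 n t)).indicator
      ((P n).measurableSet_fiber _)
  · filter_upwards [hFcont] with t ht
    have h1 : Filter.Tendsto (fun n => P n t) Filter.atTop (nhds (p t)) :=
      SimpleFunc.tendsto_approxOn hp.measurable h0 (subset_closure (hpΩ t))
    have h2 : Filter.Tendsto (fun n => P n t) Filter.atTop (nhdsWithin (p t) Ω) :=
      tendsto_nhdsWithin_iff.2 ⟨h1, Filter.Eventually.of_forall fun n =>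
        SimpleFunc.approxOn_mem hp.measurable h0 n t⟩
    exact (ht (p t) (hpΩ t)).tendsto.comp h2

lemma norm_le_of_comp {m : ℕ} (hm : 0 < m) {r : ℝ} (hr : 0 ≤ r) (x : EuclideanSpace ℝ (Fin m))
    (h : ∀ i, |x i| ≤ r / m) : ‖x‖ ≤ r := by
  have hm' : (1 : ℝ) ≤ m := by exact_mod_cast hm
  rw [EuclideanSpace.norm_eq]
  apply Real.sqrt_le_iff.2 ⟨hr, ?_⟩
  calc ∑ i, ‖x i‖ ^ 2 ≤ ∑ _i : Fin m, (r / m) ^ 2 := by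
        apply Finset.sum_le_sum
        intro i _
        exact pow_le_pow_left₀ (norm_nonneg _) (h i) 2
    _ = r ^ 2 / m := by
        simp only [Finset.sum_const, Finset.card_univ, Fintype.card_fin, nsmul_eq_mul]
        field_simp
    _ ≤ r ^ 2 := div_le_self (sq_nonneg _) hm'

lemma comp_le_norm {m : ℕ} (x : EuclideanSpace ℝ (Fin m)) (i : Fin m) : |x i| ≤ ‖x‖ := by
  simpa using PiLp.norm_apply_le x i

lemma bddM_comp {m : ℕ} {Ω : Set (EuclideanSpace ℝ (Fin m))} {a c M : ℝ}
    {F : EuclideanSpace ℝ (Fin m) → ℝ → EuclideanSpace ℝ (Fin m)}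
    (hFmeas : ∀ x ∈ Ω, AEStronglyMeasurable (fun t => F x t) (volume.restrict (Icc a c)))
    (hFcont : ∀ᵐ t ∂(volume.restrict (Icc a c)), ContinuousOn (fun x => F x t) Ω)
    {p : ℝ → EuclideanSpace ℝ (Fin m)} (hp : Continuous p) (hpΩ : ∀ t, p t ∈ Ω)
    (hM : ∀ᵐ t ∂(volume.restrict (Icc a c)), ‖F (p t) t‖ ≤ M) (i : Fin m) :
    BddM a c M (fun t => F (p t) t i) := by
  refine ⟨?_, ?_⟩
  · exact (EuclideanSpace.proj (𝕜 := ℝ) i).continuous.comp_aestronglyMeasurable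
      (nemytskii hFmeas hFcont hp hpΩ)
  · filter_upwards [hM] with t ht
    exact (comp_le_norm _ i).trans ht

/-- The Volterra operator. -/
noncomputable def volG (a : ℝ) {m : ℕ} (α : Fin m → ℝ) (qa : EuclideanSpace ℝ (Fin m))
    (F : EuclideanSpace ℝ (Fin m) → ℝ → EuclideanSpace ℝ (Fin m))
    (p : ℝ → EuclideanSpace ℝ (Fin m)) (t : ℝ) : EuclideanSpace ℝ (Fin m) :=
  WithLp.toLp 2 (fun i => qa i + rlInt a (α i) (fun τ => F (p τ) τ i) t)

lemma exists_small {m : ℕ} (α : Fin m → ℝ) (hα : ∀ i, 0 < α i) (C : Fin m → ℝ) {r d : ℝ}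
    (hr : 0 < r) (hd : 0 < d) : ∃ ε, 0 < ε ∧ ε ≤ d ∧ ∀ i, C i * ε ^ α i ≤ r := by
  have h1 : ∀ i, ∀ᶠ ε in nhdsWithin (0 : ℝ) (Ioi 0), C i * ε ^ α i < r := by
    intro i
    have hc : Continuous fun ε : ℝ => C i * ε ^ α i :=
      continuous_const.mul (Continuous.rpow_const continuous_id fun _ => Or.inr (hα i).le)
    have ht := (hc.tendsto 0).mono_left (nhdsWithin_le_nhds (s := Ioi 0))
    simp only [Real.zero_rpow (hα i).ne', mul_zero] at ht
    exact ht.eventually_lt_const hr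
  have h2 : ∀ᶠ ε in nhdsWithin (0 : ℝ) (Ioi 0), ε ≤ d :=
    nhdsWithin_le_nhds (Iic_mem_nhds hd)
  obtain ⟨ε, h3, h4, h5⟩ := ((Filter.eventually_all.2 h1).and
    (h2.and self_mem_nhdsWithin)).exists
  exact ⟨ε, h5, h4, fun i => (h3 i).le⟩

lemma extend_sol {m : ℕ} (hm : 0 < m) {Ω : Set (EuclideanSpace ℝ (Fin m))} {a b s : ℝ}
    (hab : a < b) (hbs : b < s) {α : Fin m → ℝ} (hα : ∀ i, 0 < α i ∧ α i ≤ 1)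
    {qa : EuclideanSpace ℝ (Fin m)}
    {F : EuclideanSpace ℝ (Fin m) → ℝ → EuclideanSpace ℝ (Fin m)}
    (hFmeas : ∀ x ∈ Ω, AEStronglyMeasurable (fun t => F x t) (volume.restrict (Icc a s)))
    (hFcont : ∀ᵐ t ∂(volume.restrict (Icc a s)), ContinuousOn (fun x => F x t) Ω)
    {q : ℝ → EuclideanSpace ℝ (Fin m)} (hq : Continuous q) (hqΩ : ∀ t, q t ∈ Ω)
    (hqb : ∀ t, b ≤ t → q t = q b) {R M L : ℝ} (hR : 0 < R)
    (hRΩ : Metric.closedBall (q b) R ⊆ Ω)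
    (hM : ∀ᵐ t ∂(volume.restrict (Icc a s)), ∀ x ∈ range q ∪ Metric.closedBall (q b) R,
      ‖F x t‖ ≤ M)
    (hL0 : 0 ≤ L)
    (hL : ∀ᵐ t ∂(volume.restrict (Icc b s)), ∀ x₁ ∈ Metric.closedBall (q b) R,
      ∀ x₂ ∈ Metric.closedBall (q b) R, ‖F x₂ t - F x₁ t‖ ≤ L * ‖x₂ - x₁‖)
    (hvol : ∀ t ∈ Icc a b, q t = volG a α qa F q t) :
    ∃ c, b < c ∧ c ≤ s ∧ ∃ p : ℝ → EuclideanSpace ℝ (Fin m), Continuous p ∧ (∀ t, p t ∈ Ω) ∧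
      (∀ t, p t ∈ range q ∪ Metric.closedBall (q b) R) ∧
      (∀ t ∈ Icc a b, p t = q t) ∧ ∀ t ∈ Icc a c, p t = volG a α qa F p t := by
  have hm0 : (0 : ℝ) < m := by exact_mod_cast hm
  obtain ⟨ε₁, h1pos, h1d, h1⟩ := exists_small α (fun i => (hα i).1)
    (fun i => 2 * M / α i / Real.Gamma (α i)) (r := R / m) (d := s - b) (by positivity)
    (by linarith)
  obtain ⟨ε, hε, hεd, h2⟩ := exists_small α (fun i => (hα i).1)
    (fun i => 2 * L / α i / Real.Gamma (α i)) (r := 1 / 2 / m) (d := ε₁) (by positivity) h1pos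
  have hM0 : 0 ≤ M := by
    have : (volume.restrict (Icc a s)) ≠ 0 := by
      simp [Measure.restrict_eq_zero, hab.trans hbs]
    have : (ae (volume.restrict (Icc a s))).NeBot := ae_neBot.2 this
    obtain ⟨t, ht⟩ := hM.exists
    exact (norm_nonneg _).trans (ht (q b) (Or.inl (mem_range_self b)))
  set c := b + ε with hc
  have hac : a ≤ c := by linarith
  have hcs : c ≤ s := by linarith
  have hsub : Icc a c ⊆ Icc a s := Icc_subset_Icc le_rfl hcs
  have hFmeas' : ∀ x ∈ Ω, AEStronglyMeasurable (fun t => F x t) (volume.restrict (Icc a c)) :=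
    fun x hx => (hFmeas x hx).mono_set hsub
  have hFcont' := ae_restrict_of_ae_restrict_of_subset hsub hFcont
  have hM' := ae_restrict_of_ae_restrict_of_subset hsub hM
  have hL' := ae_restrict_of_ae_restrict_of_subset (Icc_subset_Icc (le_refl b) hcs) hL
  set K := range q ∪ Metric.closedBall (q b) R with hK
  have hKΩ : K ⊆ Ω := union_subset (range_subset_iff.2 hqΩ) hRΩ
  let X : Set C(Icc a c, EuclideanSpace ℝ (Fin m)) :=
    {p | (∀ t : Icc a c, (t : ℝ) ≤ b → p t = q t) ∧
      ∀ t : Icc a c, b ≤ (t : ℝ) → p t ∈ Metric.closedBall (q b) R}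
  have hXc : IsClosed X := by
    have e : X = (⋂ (t : Icc a c) (_ : (t : ℝ) ≤ b), {p | p t = q t}) ∩
        ⋂ (t : Icc a c) (_ : b ≤ (t : ℝ)), {p | p t ∈ Metric.closedBall (q b) R} := by
      ext p; simp [X]
    rw [e]
    refine IsClosed.inter ?_ ?_
    · exact isClosed_iInter fun t => isClosed_iInter fun _ =>
        isClosed_eq (continuous_eval_const t) continuous_const
    · exact isClosed_iInter fun t => isClosed_iInter fun _ =>
        Metric.isClosed_closedBall.preimage (continuous_eval_const t)
  have : CompleteSpace X := hXc.completeSpace_coe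
  let ex : X → ℝ → EuclideanSpace ℝ (Fin m) := fun p => IccExtend hac p.1
  have exc : ∀ p, Continuous (ex p) := fun p => p.1.continuous.Icc_extend'
  have exK : ∀ p t, ex p t ∈ K := by
    intro p t
    change p.1 (projIcc a c hac t) ∈ K
    rcases le_total ((projIcc a c hac t : Icc a c) : ℝ) b with h | h
    · rw [p.2.1 _ h]; exact Or.inl (mem_range_self _)
    · exact Or.inr (p.2.2 _ h)
  have exΩ : ∀ p t, ex p t ∈ Ω := fun p t => hKΩ (exK p t)
  have exq : ∀ p, ∀ t ∈ Icc a b, ex p t = q t := by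
    intro p t ht
    have ht' : t ∈ Icc a c := ⟨ht.1, by linarith [ht.2]⟩
    change IccExtend hac p.1 t = q t
    rw [IccExtend_of_mem _ _ ht']
    exact p.2.1 ⟨t, ht'⟩ ht.2
  have exB : ∀ p, ∀ t ∈ Icc b c, ex p t ∈ Metric.closedBall (q b) R := by
    intro p t ht
    have ht' : t ∈ Icc a c := ⟨by linarith [ht.1], ht.2⟩
    change IccExtend hac p.1 t ∈ _
    rw [IccExtend_of_mem _ _ ht']
    exact p.2.2 ⟨t, ht'⟩ ht.1
  have hB : ∀ p i, BddM a c M (fun τ => F (ex p τ) τ i) := by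
    intro p i
    refine bddM_comp hFmeas' hFcont' (exc p) (exΩ p) ?_ i
    filter_upwards [hM'] with t ht
    exact ht _ (exK p t)
  have hGc : ∀ p, ContinuousOn (volG a α qa F (ex p)) (Icc a c) := by
    intro p
    have h : ContinuousOn (fun t => (fun i => qa i + rlInt a (α i) (fun τ => F (ex p τ) τ i) t))
        (Icc a c) :=
      continuousOn_pi.2 fun i => continuousOn_const.add (rl_cont (hα i).1 (hα i).2 (hB p i))
    exact (PiLp.continuous_toLp 2 _).comp_continuousOn h
  have hGq : ∀ p, ∀ t ∈ Icc a b, volG a α qa F (ex p) t = q t := by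
    intro p t ht
    rw [hvol t ht]
    unfold volG
    congr 1
    ext i
    congr 1
    apply rl_congr ht.1
    · exact ae_restrict_of_forall_mem measurableSet_Icc fun τ hτ => by
        rw [exq p τ ⟨hτ.1, hτ.2.trans ht.2⟩]
    · rw [exq p t ht]
  have hGB : ∀ p, ∀ t ∈ Icc b c, volG a α qa F (ex p) t ∈ Metric.closedBall (q b) R := by
    intro p t ht
    rw [mem_closedBall_iff_norm, ← hGq p b ⟨hab.le, le_rfl⟩]
    refine norm_le_of_comp hm hR.le _ fun i => ?_
    have := rl_holder (hα i).1 (hα i).2 (hB p i) hab.le ht.1 ht.2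
    have e : (volG a α qa F (ex p) t - volG a α qa F (ex p) b) i
      = rlInt a (α i) (fun τ => F (ex p τ) τ i) t - rlInt a (α i) (fun τ => F (ex p τ) τ i) b := by
      simp [volG]
    rw [e]
    refine this.trans (le_trans ?_ (h1 i))
    have g := Real.Gamma_pos_of_pos (hα i).1
    have g' := (hα i).1
    refine mul_le_mul_of_nonneg_left ?_ (by positivity)
    exact Real.rpow_le_rpow (by linarith [ht.1]) (by linarith [ht.2]) (hα i).1.le
  let T : X → X := fun p => ⟨⟨fun t => volG a α qa F (ex p) t,
    continuousOn_iff_continuous_domRestrict.1 (hGc p)⟩,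
    fun t ht => hGq p t ⟨t.2.1, ht⟩, fun t ht => hGB p t ⟨ht, t.2.2⟩⟩
  have hT : ContractingWith (1 / 2) T := by
    refine ⟨by rw [div_lt_one] <;> norm_num, LipschitzWith.of_dist_le_mul fun p p' => ?_⟩
    have hD : (0 : ℝ) ≤ dist p p' := dist_nonneg
    rw [Subtype.dist_eq, ContinuousMap.dist_le (by positivity)]
    intro t
    change dist (volG a α qa F (ex p) t) (volG a α qa F (ex p') t) ≤ _
    rcases le_total (t : ℝ) b with h | h
    · rw [hGq p t ⟨t.2.1, h⟩, hGq p' t ⟨t.2.1, h⟩, dist_self]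
      positivity
    · rw [dist_eq_norm]
      have hD' : (0 : ℝ) ≤ ((1 / 2 : NNReal) : ℝ) * dist p p' := by positivity
      refine norm_le_of_comp hm hD' _ fun i => ?_
      have hBd : BddM a c (L * dist p p') (fun τ => F (ex p τ) τ i - F (ex p' τ) τ i) := by
        refine ⟨((hB p i).sub (hB p' i)).1, ?_⟩
        have hl := (ae_restrict_iff' measurableSet_Icc).1 hL'
        rw [ae_restrict_iff' measurableSet_Icc]
        filter_upwards [hl] with τ hl hτ
        rcases le_total τ b with hb | hb
        · rw [exq p τ ⟨hτ.1, hb⟩, exq p' τ ⟨hτ.1, hb⟩, sub_self, abs_zero]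
          positivity
        · have hl := hl ⟨hb, hτ.2⟩ _ (exB p' τ ⟨hb, hτ.2⟩) _ (exB p τ ⟨hb, hτ.2⟩)
          refine (comp_le_norm (F (ex p τ) τ - F (ex p' τ) τ) i).trans (hl.trans ?_)
          refine mul_le_mul_of_nonneg_left ?_ hL0
          rw [← dist_eq_norm]
          exact ContinuousMap.dist_apply_le_dist (f := p.1) (g := p'.1) (projIcc a c hac τ)
      have hz : rlInt a (α i) (fun τ => F (ex p τ) τ i - F (ex p' τ) τ i) b = 0 := by
        rw [rl_congr (v := fun _ => 0) hab.le]
        · rw [rl_eq (hα i).1]; simp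
        · exact ae_restrict_of_forall_mem measurableSet_Icc fun τ hτ => by
            rw [exq p τ hτ, exq p' τ hτ, sub_self]
        · rw [exq p b ⟨hab.le, le_rfl⟩, exq p' b ⟨hab.le, le_rfl⟩, sub_self]
      have hh := rl_holder (hα i).1 (hα i).2 hBd hab.le h t.2.2
      rw [hz, sub_zero, rl_sub (hα i).1 (hB p i) (hB p' i) t.2] at hh
      have e : (volG a α qa F (ex p) t - volG a α qa F (ex p') t) i
        = rlInt a (α i) (fun τ => F (ex p τ) τ i) t
          - rlInt a (α i) (fun τ => F (ex p' τ) τ i) t := by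
        simp [volG]
      rw [e]
      refine hh.trans ?_
      have g := Real.Gamma_pos_of_pos (hα i).1
      have g' := (hα i).1
      have hr : ((t : ℝ) - b) ^ α i ≤ ε ^ α i :=
        Real.rpow_le_rpow (by linarith) (by linarith [t.2.2]) (hα i).1.le
      have h2i := h2 i
      calc 2 * (L * dist p p') / α i / Real.Gamma (α i) * ((t : ℝ) - b) ^ α i
          ≤ 2 * (L * dist p p') / α i / Real.Gamma (α i) * ε ^ α i :=
            mul_le_mul_of_nonneg_left hr (by positivity)
        _ = dist p p' * (2 * L / α i / Real.Gamma (α i) * ε ^ α i) := by ring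
        _ ≤ dist p p' * (1 / 2 / m) := mul_le_mul_of_nonneg_left h2i hD
        _ = _ := by push_cast; ring
  have hne : Nonempty X := by
    refine ⟨⟨⟨fun t => q t, hq.comp continuous_subtype_val⟩, fun t _ => rfl, fun t ht => ?_⟩⟩
    change q t ∈ _
    rw [hqb t ht]
    exact Metric.mem_closedBall_self hR.le
  set p := ContractingWith.fixedPoint T hT with hp
  have hfix : T p = p := hT.fixedPoint_isFixedPt
  refine ⟨c, by linarith, hcs, ex p, exc p, exΩ p, exK p, exq p, fun t ht => ?_⟩
  have : (T p).1 ⟨t, ht⟩ = p.1 ⟨t, ht⟩ := by rw [hfix]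
  change IccExtend hac p.1 t = _
  rw [IccExtend_of_mem _ _ ht, ← this]
  rfl

theorem statement18 (a : ℝ) (If : Set ℝ)
    (haI : a ∈ If) (hIsub : If ⊆ Set.Ici a) (hIint : (interior If).Nonempty)
    (hIord : If.OrdConnected)
    (m : ℕ) (hm : 0 < m) (Ω : Set (EuclideanSpace ℝ (Fin m)))
    (hΩopen : IsOpen Ω) (hΩne : Ω.Nonempty)
    (α : Fin m → ℝ) (hα : ∀ i, 0 < α i ∧ α i ≤ 1)
    (qa : EuclideanSpace ℝ (Fin m)) (hqa : qa ∈ Ω)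
    (F : EuclideanSpace ℝ (Fin m) → ℝ → EuclideanSpace ℝ (Fin m))
    -- Carathéodory assumptions
    (hFmeas : ∀ x ∈ Ω, MeasureTheory.AEStronglyMeasurable (fun t => F x t)
      (MeasureTheory.volume.restrict If))
    (hFcont : ∀ᵐ t ∂(MeasureTheory.volume.restrict If), ContinuousOn (fun x => F x t) Ω)
    -- `F` is bounded on compacts
    (hbdd : ∀ K : Set (EuclideanSpace ℝ (Fin m)), K ⊆ Ω → IsCompact K →
      ∀ c ∈ If, ∀ d ∈ If, c ≤ d → ∃ M : ℝ, 0 ≤ M ∧ ∀ x ∈ K,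
        ∀ᵐ t ∂(MeasureTheory.volume.restrict (Set.Icc c d)), ‖F x t‖ ≤ M)
    -- `F` is locally Lipschitz continuous in its first variable
    (hlip : ∀ x ∈ Ω, ∀ t ∈ If, ∃ R > (0:ℝ), ∃ δ > (0:ℝ), ∃ L : ℝ, 0 ≤ L ∧
      Metric.closedBall x R ⊆ Ω ∧
      ∀ x₁ ∈ Metric.closedBall x R, ∀ x₂ ∈ Metric.closedBall x R,
        ∀ᵐ τ ∂(MeasureTheory.volume.restrict (Set.Icc (t - δ) (t + δ) ∩ If)),
          ‖F x₂ τ - F x₁ τ‖ ≤ L * ‖x₂ - x₁‖) :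
    ∀ (q : ℝ → EuclideanSpace ℝ (Fin m)) (I : Set ℝ),
      IsMaximalSol a If Ω α qa F q I → I ≠ If →
      ∃ b ∈ If, a < b ∧ I = Set.Ico a b ∧
        ¬ ∃ ξ ∈ Ω, Filter.Tendsto q (nhdsWithin b (Set.Ico a b)) (nhds ξ) := by
  rintro q I ⟨⟨⟨haI', hIa, hInt, hOC⟩, hIIf, hqc, hqΩ, hq0, hcap⟩, hmax⟩ hne
  obtain ⟨s, hsf, hsI⟩ : ∃ s ∈ If, s ∉ I := by
    by_contra! h
    exact hne (Subset.antisymm hIIf h)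
  have hlt : ∀ t ∈ I, t < s := by
    intro t ht
    by_contra! h
    exact hsI (hOC.out haI' ht ⟨hIsub hsf, h⟩)
  have hbd : BddAbove I := ⟨s, fun t ht => (hlt t ht).le⟩
  set b := sSup I with hb
  have hleb : ∀ t ∈ I, t ≤ b := fun t ht => le_csSup hbd ht
  have hbs : b ≤ s := csSup_le ⟨a, haI'⟩ fun t ht => (hlt t ht).le
  have hab : a < b := by
    obtain ⟨y, hy⟩ := hInt
    have hev : ∀ᶠ z in nhds y, z ∈ I := mem_interior_iff_mem_nhds.1 hy
    obtain ⟨z, hz, hzI⟩ := hev.exists_gt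
    exact lt_of_le_of_lt (hIa (interior_subset hy)) (lt_of_lt_of_le hz (hleb z hzI))
  have hbf : b ∈ If := hIord.out haI hsf ⟨hab.le, hbs⟩
  have hIco : Ico a b ⊆ I := by
    intro t ht
    obtain ⟨x, hx, htx⟩ := exists_lt_of_lt_csSup ⟨a, haI'⟩ ht.2
    exact hOC.out haI' hx ⟨ht.1, htx.le⟩
  have hsubf : ∀ d ∈ If, Icc a d ⊆ If := fun d hd => hIord.out haI hd
  have bound : ∀ K : Set (EuclideanSpace ℝ (Fin m)), K ⊆ Ω → IsCompact K → ∀ d ∈ If,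
      ∃ M : ℝ, ∀ᵐ t ∂(volume.restrict (Icc a d)), ∀ x ∈ K, ‖F x t‖ ≤ M := by
    intro K hKΩ hK d hd
    obtain ⟨M, -, hM⟩ := hbdd K hKΩ hK a haI d hd (hIsub hd)
    refine ⟨M, ?_⟩
    have h := ae_forall_le (X := K) (μ := volume.restrict (Icc a d))
      (φ := fun x t => ‖F x t‖) (ψ := fun _ => M) continuous_const
      (fun x => hM x x.2) ?_
    · filter_upwards [h] with t ht x hx
      exact ht ⟨x, hx⟩
    · filter_upwards [ae_restrict_of_ae_restrict_of_subset (hsubf d hd) hFcont] with t ht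
      exact (continuousOn_iff_continuous_domRestrict.1 (ht.mono hKΩ)).norm
  have Bp : ∀ p : ℝ → EuclideanSpace ℝ (Fin m), Continuous p → (∀ t, p t ∈ Ω) →
      ∀ K : Set (EuclideanSpace ℝ (Fin m)), K ⊆ Ω → IsCompact K → (∀ t, p t ∈ K) →
      ∀ d ∈ If, ∃ M, ∀ i, BddM a d M (fun t => F (p t) t i) := by
    intro p hp hpΩ K hKΩ hK hpK d hd
    obtain ⟨M, hM⟩ := bound K hKΩ hK d hd
    refine ⟨M, fun i => bddM_comp (Ω := Ω) (fun x hx => (hFmeas x hx).mono_set (hsubf d hd))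
      (ae_restrict_of_ae_restrict_of_subset (hsubf d hd) hFcont) hp hpΩ ?_ i⟩
    filter_upwards [hM] with t ht
    exact ht _ (hpK t)
  have intOn : ∀ {d M : ℝ} {u : ℝ → ℝ}, BddM a d M u → ∀ x ∈ Icc a d,
      IntegrableOn u (Icc a x) := by
    intro d M u hu x hx
    rw [integrableOn_Icc_iff_integrableOn_Ioc]
    exact (intervalIntegrable_iff_integrableOn_Ioc_of_le hx.1).1 ((hu.mono le_rfl hx.2).ii hx.1)
  have hisI : ∀ d, a < d → IsIntervalFrom a (Icc a d) := by
    intro d hd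
    refine ⟨left_mem_Icc.2 hd.le, fun t ht => ht.1, ?_, ordConnected_Icc⟩
    rw [interior_Icc]
    exact nonempty_Ioo.2 hd
  have step : ∀ p : ℝ → EuclideanSpace ℝ (Fin m), EqOn p q (Ico a b) →
      ∀ i, ∃ d : ℝ, ∀ᵐ t ∂(volume.restrict (Icc a b)),
        rlInt a (1 - α i) (fun τ => p τ i - qa i) t = d + ∫ τ in a..t, F (p τ) τ i := by
    intro p hpq i
    obtain ⟨d, h, -, h1, h2⟩ := hcap i
    refine ⟨d, ?_⟩
    rw [← restrict_Ico_eq_restrict_Icc]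
    have h1' := ae_restrict_of_ae_restrict_of_subset hIco h1
    have h2' := (ae_restrict_iff' measurableSet_Ico).1
      (ae_restrict_of_ae_restrict_of_subset hIco h2)
    filter_upwards [h1', ae_restrict_mem measurableSet_Ico] with t ht htm
    have e1 : rlInt a (1 - α i) (fun τ => p τ i - qa i) t
        = rlInt a (1 - α i) (fun τ => q τ i - qa i) t := by
      apply rl_congr htm.1
      · exact ae_restrict_of_forall_mem measurableSet_Icc fun τ hτ => by
          rw [hpq ⟨hτ.1, lt_of_le_of_lt hτ.2 htm.2⟩]
      · rw [hpq htm]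
    have e2 : ∫ τ in a..t, F (p τ) τ i = ∫ τ in a..t, h τ := by
      apply intervalIntegral.integral_congr_ae
      filter_upwards [h2'] with τ hτ hm
      rw [uIoc_of_le htm.1] at hm
      have hm' : τ ∈ Ico a b := ⟨hm.1.le, lt_of_le_of_lt hm.2 htm.2⟩
      rw [hτ hm', hpq hm']
    rw [e1, e2, ht]
  -- extension of a function continuous on `[a,b]`
  have ext : ∀ r : ℝ → EuclideanSpace ℝ (Fin m), ContinuousOn r (Icc a b) →
      (∀ t ∈ Icc a b, r t ∈ Ω) → ∃ p : ℝ → EuclideanSpace ℝ (Fin m), Continuous p ∧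
        (∀ t, p t ∈ Ω) ∧ IsCompact (range p) ∧ EqOn p r (Icc a b) ∧
        ∀ t, b ≤ t → p t = p b := by
    intro r hr hrΩ
    have hc := continuousOn_iff_continuous_domRestrict.1 hr
    refine ⟨IccExtend hab.le (domRestrict (Icc a b) r), hc.Icc_extend', ?_, ?_, ?_, ?_⟩
    · intro t
      exact hrΩ _ (projIcc a b hab.le t).2
    · rw [IccExtend_range]
      exact isCompact_range hc
    · intro t ht
      rw [IccExtend_of_mem _ _ ht]
      rfl
    · intro t ht
      rw [IccExtend_of_right_le _ _ ht, IccExtend_of_right_le _ _ le_rfl]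
  by_cases hbI : b ∈ I
  · exfalso
    have hI : I = Icc a b := Subset.antisymm (fun t ht => ⟨hIa ht, hleb t ht⟩)
      (hOC.out haI' hbI)
    have hbs' : b < s := hlt b hbI
    obtain ⟨p, hpc, hpΩ, hpK, hpq, hpb⟩ := ext q (hI ▸ hqc) (fun t ht => hqΩ t (hI ▸ ht))
    obtain ⟨M₀, hM₀⟩ := Bp p hpc hpΩ (range p) (range_subset_iff.2 hpΩ) hpK mem_range_self b hbf
    have hvol : ∀ t ∈ Icc a b, p t = volG a α qa F p t := by
      intro t ht
      ext i
      obtain ⟨d, hd⟩ := step p (hpq.mono Ico_subset_Icc_self) i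
      have hci : Continuous fun τ => p τ i :=
        (EuclideanSpace.proj (𝕜 := ℝ) i).continuous.comp hpc
      have h := volterra_of_caputo (hα i).1 (hα i).2 hab (hM₀ i)
        (g := fun τ => p τ i - qa i) (hci.sub continuous_const).continuousOn
        (by rw [hpq (left_mem_Icc.2 hab.le), hq0, sub_self]) hd t ht
      change p t i = qa i + rlInt a (α i) (fun τ => F (p τ) τ i) t
      rw [← h]
      ring
    obtain ⟨R, hR, δ, hδ, L, hL0, hRΩ, hL⟩ := hlip (p b) (hpΩ b) b hbf
    set s' := min s (b + δ) with hs'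
    have hbs'' : b < s' := lt_min hbs' (by linarith)
    have hs'f : s' ∈ If := hIord.out haI hsf ⟨(hab.trans hbs'').le, min_le_left _ _⟩
    have hKΩ : range p ∪ Metric.closedBall (p b) R ⊆ Ω :=
      union_subset (range_subset_iff.2 hpΩ) hRΩ
    have hKc : IsCompact (range p ∪ Metric.closedBall (p b) R) :=
      hpK.union (isCompact_closedBall _ _)
    obtain ⟨M, hM⟩ := bound _ hKΩ hKc s' hs'f
    have hLs : Icc b s' ⊆ Icc (b - δ) (b + δ) ∩ If := by
      intro t ht
      exact ⟨⟨by linarith [ht.1], ht.2.trans (min_le_right _ _)⟩,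
        hsubf s' hs'f ⟨hab.le.trans ht.1, ht.2⟩⟩
    have hL' : ∀ᵐ t ∂(volume.restrict (Icc b s')), ∀ x₁ ∈ Metric.closedBall (p b) R,
        ∀ x₂ ∈ Metric.closedBall (p b) R, ‖F x₂ t - F x₁ t‖ ≤ L * ‖x₂ - x₁‖ := by
      have h := ae_forall_le (X := Metric.closedBall (p b) R × Metric.closedBall (p b) R)
        (μ := volume.restrict (Icc b s'))
        (φ := fun x t => ‖F x.2 t - F x.1 t‖) (ψ := fun x => L * ‖(x.2 : _) - x.1.1‖)
        (by fun_prop)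
        (fun x => ae_restrict_of_ae_restrict_of_subset hLs (hL x.1 x.1.2 x.2 x.2.2)) ?_
      · filter_upwards [h] with t ht x₁ h₁ x₂ h₂
        exact ht (⟨x₁, h₁⟩, ⟨x₂, h₂⟩)
      · filter_upwards [ae_restrict_of_ae_restrict_of_subset
          (hLs.trans inter_subset_right) hFcont] with t ht
        have hc := continuousOn_iff_continuous_domRestrict.1 (ht.mono hRΩ)
        exact ((hc.comp continuous_snd).sub (hc.comp continuous_fst)).norm
    obtain ⟨c, hbc, hcs, r, hrc, hrΩ, hrK, hrp, hrvol⟩ := extend_sol hm hab hbs'' hα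
      (fun x hx => (hFmeas x hx).mono_set (hsubf s' hs'f))
      (ae_restrict_of_ae_restrict_of_subset (hsubf s' hs'f) hFcont) hpc hpΩ hpb hR hRΩ hM hL0
      hL' hvol
    have hcf : c ∈ If := hsubf s' hs'f ⟨(hab.trans hbc).le, hcs⟩
    obtain ⟨M₁, hM₁⟩ := Bp r hrc hrΩ _ hKΩ hKc hrK c hcf
    have hrq : EqOn r q I := by
      rw [hI]
      intro t ht
      rw [hrp t ht, hpq ht]
    have hsol : IsCaputoLocalSol a If Ω α qa F r (Icc a c) := by
      refine ⟨hisI c (hab.trans hbc), hsubf c hcf, hrc.continuousOn, fun t _ => hrΩ t,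
        (hrq haI').trans hq0, fun i => ⟨0, fun t => F (r t) t i, intOn (hM₁ i), ?_,
        Filter.Eventually.of_forall fun _ => rfl⟩⟩
      refine ae_restrict_of_forall_mem measurableSet_Icc fun t ht => ?_
      rw [zero_add]
      refine caputo_of_volterra (hα i).1 (hα i).2 (hM₁ i) (fun t ht => ?_) t ht
      have h : r t i = volG a α qa F r t i := by rw [← hrvol t ht]
      rw [h]
      simp [volG]
    have := hmax r _ hsol (hI ▸ Icc_subset_Icc le_rfl hbc.le) hrq
    have hcI : c ∈ I := this ▸ right_mem_Icc.2 (hab.trans hbc).le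
    exact absurd (hleb c hcI) (not_le.2 hbc)
  · have hI : I = Ico a b := by
      refine Subset.antisymm (fun t ht => ⟨hIa ht, lt_of_le_of_ne (hleb t ht) ?_⟩) hIco
      rintro rfl
      exact hbI ht
    refine ⟨b, hbf, hab, hI, ?_⟩
    rintro ⟨ξ, hξ, hlim⟩
    have hrc : ContinuousOn (Function.update q b ξ) (Icc a b) := by
      rw [continuousOn_update_iff, Icc_sdiff_right]
      exact ⟨hI ▸ hqc, fun _ => hlim⟩
    have hrq : EqOn (Function.update q b ξ) q (Ico a b) := fun t ht =>
      Function.update_of_ne ht.2.ne _ _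
    obtain ⟨p, hpc, hpΩ, hpK, hpq, -⟩ := ext _ hrc (fun t ht => by
      rcases ht.2.eq_or_lt with rfl | h
      · simpa using hξ
      · rw [hrq ⟨ht.1, h⟩]; exact hqΩ t (hIco ⟨ht.1, h⟩))
    have hpq' : EqOn p q (Ico a b) := (hpq.mono Ico_subset_Icc_self).trans hrq
    obtain ⟨M₀, hM₀⟩ := Bp p hpc hpΩ (range p) (range_subset_iff.2 hpΩ) hpK mem_range_self b hbf
    have hsol : IsCaputoLocalSol a If Ω α qa F p (Icc a b) := by
      refine ⟨hisI b hab, hsubf b hbf, hpc.continuousOn, fun t _ => hpΩ t,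
        (hpq' (left_mem_Ico.2 hab)).trans hq0, fun i => ?_⟩
      obtain ⟨d, hd⟩ := step p hpq' i
      exact ⟨d, fun t => F (p t) t i, intOn (hM₀ i), hd, Filter.Eventually.of_forall fun _ => rfl⟩
    have := hmax p _ hsol (hI ▸ Ico_subset_Icc_self) (hI ▸ hpq')
    exact hbI (this ▸ right_mem_Icc.2 hab.le)
end
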